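/- arXiv:0912.0405 — 3 statements merged into one kernel-verified Lean document; each statement's English description precedes it below -/
import Mathlib

section
/- Let s = (β_1, β_2) ∈ B_4^2 be a degree 4, length 2 braid system whose Hurwitz orbit s·B_2 is finite. Then #(s·B_2) ≤ 8. -/
open FreeGroup in
/-- The braid relations on `m` strands (generators indexed 0-based by `Fin (m-1)`). -/
def braidRels (m : ℕ) : Set (FreeGroup (Fin (m - 1))) :=
  {r | ∃ i j : Fin (m - 1), (i.val + 2 ≤ j.val ∨ j.val + 2 ≤ i.val) ∧
        r = of i * of j * (of j * of i)⁻¹} ∪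
  {r | ∃ i j : Fin (m - 1), (i.val + 1 = j.val ∨ j.val + 1 = i.val) ∧
        r = of i * of j * of i * (of j * of i * of j)⁻¹}

/-- The braid group on `m` strands. -/
abbrev BraidGroup (m : ℕ) := PresentedGroup (braidRels m)

/-- The Artin generator `σ_i` (1-based index `1 ≤ i ≤ m-1`); junk value `1` out of range. -/
def braidGen (m : ℕ) (i : ℕ) : BraidGroup m :=
  if h : 1 ≤ i ∧ i ≤ m - 1 then PresentedGroup.of ⟨i - 1, by omega⟩ else 1

/-- A braid is periodic if some positive power of it is central. -/
def IsPeriodic {m : ℕ} (β : BraidGroup m) : Prop :=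
  ∃ k : ℕ, 1 ≤ k ∧ β ^ k ∈ Subgroup.center (BraidGroup m)

/-- The elementary Hurwitz move at (0-based) position `i`, as a bijection on `n`-tuples. -/
def hEquiv {G : Type*} [Group G] {n : ℕ} (i : Fin (n - 1)) : Equiv.Perm (Fin n → G) where
  toFun s := fun k =>
    if k.val = i.val then s ⟨i.val + 1, by have := i.isLt; omega⟩
    else if k.val = i.val + 1 then
      (s ⟨i.val + 1, by have := i.isLt; omega⟩)⁻¹ * s ⟨i.val, by have := i.isLt; omega⟩ *
        s ⟨i.val + 1, by have := i.isLt; omega⟩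
    else s k
  invFun t := fun k =>
    if k.val = i.val then
      t ⟨i.val, by have := i.isLt; omega⟩ * t ⟨i.val + 1, by have := i.isLt; omega⟩ *
        (t ⟨i.val, by have := i.isLt; omega⟩)⁻¹
    else if k.val = i.val + 1 then t ⟨i.val, by have := i.isLt; omega⟩
    else t k
  left_inv s := by
    funext k
    have hlt := i.isLt
    rcases k with ⟨kv, hkv⟩
    by_cases h1 : kv = i.val
    · subst h1
      simp [mul_assoc]
    · by_cases h2 : kv = i.val + 1
      · subst h2
        simp
      · simp [h1, h2]
  right_inv t := by
    funext k
    have hlt := i.isLt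
    rcases k with ⟨kv, hkv⟩
    by_cases h1 : kv = i.val
    · subst h1
      simp [mul_assoc]
    · by_cases h2 : kv = i.val + 1
      · subst h2
        simp [mul_assoc]
      · simp [h1, h2]

/-- The (right) Hurwitz action of a word in the generators `σ_1, …, σ_{n-1}` of `B_n`
on `n`-tuples of elements of a group `G`: `hurwitzAct (w₁ * w₂) s = hurwitzAct w₂ (hurwitzAct w₁ s)`. -/
def hurwitzAct {G : Type*} [Group G] {n : ℕ} (w : FreeGroup (Fin (n - 1))) (s : Fin n → G) :
    Fin n → G :=
  (MulOpposite.unop (FreeGroup.lift (fun i => MulOpposite.op (hEquiv (G := G) (n := n) i)) w)) s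

/-- The Hurwitz orbit of a braid system. -/
def hurwitzOrbit {G : Type*} [Group G] {n : ℕ} (s : Fin n → G) : Set (Fin n → G) :=
  {t | ∃ w : FreeGroup (Fin (n - 1)), hurwitzAct w s = t}

/-- The generator `σ_i` (1-based) as a word acting on length-`n` systems. -/
def genWord (n : ℕ) (i : ℕ) : FreeGroup (Fin (n - 1)) :=
  if h : 1 ≤ i ∧ i ≤ n - 1 then FreeGroup.of ⟨i - 1, by omega⟩ else 1

/-- The pure braid word `c_i = (σ_1⁻¹ ⋯ σ_{i-1}⁻¹) σ_i² (σ_{i-1} ⋯ σ_1)`. -/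
def cWord (n : ℕ) (i : ℕ) : FreeGroup (Fin (n - 1)) :=
  ((List.range (i - 1)).map (fun t => (genWord n (t + 1))⁻¹)).prod *
    genWord n i ^ 2 *
    ((List.range (i - 1)).reverse.map (fun t => genWord n (t + 1))).prod

/-- The word `Δ_{(i,j)} = (σ_i σ_{i+1} ⋯ σ_j)(σ_i ⋯ σ_{j-1}) ⋯ (σ_i σ_{i+1})(σ_i)`. -/
def deltaWord (n i j : ℕ) : FreeGroup (Fin (n - 1)) :=
  ((List.range (j - i + 1)).map (fun t =>
    ((List.range (j - t - i + 1)).map (fun u => genWord n (i + u))).prod)).prod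

/-- The exponent-sum homomorphism, valued in `Multiplicative ℤ`. -/
def expSumHom {m : ℕ} : BraidGroup m →* Multiplicative ℤ :=
  PresentedGroup.toGroup (f := fun _ => Multiplicative.ofAdd 1) (by
    rintro r (⟨i, j, -, rfl⟩ | ⟨i, j, -, rfl⟩) <;>
      simp <;> group)

/-- The exponent sum of a braid: `e(σ_i) = 1`. -/
def esum {m : ℕ} (β : BraidGroup m) : ℤ := Multiplicative.toAdd (expSumHom β)

/-- A braid system is reducible if some non-trivial partition of the index set has all
entries from the two parts commuting. -/
def IsReducible {G : Type*} [Group G] {n : ℕ} (s : Fin n → G) : Prop :=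
  ∃ I : Set (Fin n), I.Nonempty ∧ Iᶜ.Nonempty ∧ ∀ i ∈ I, ∀ j ∈ Iᶜ, Commute (s i) (s j)

/-!
The square of the Hurwitz move on pairs conjugates `(a, b)` by `q = ab`, so a finite orbit makes `a`
commute with some power `q ^ k`, `k ≠ 0`. If `q` permutes the strands with order `m`, then `q ^ m`
is pure and `(q ^ m) ^ k` commutes with `a`; as pure braids have unique roots, `q ^ m` itself
commutes with `a` and the orbit has at most `2m` elements. Permutations of four strands have order
at most four.

Unique roots are proved by induction on the number of strands. Combing writes a pure braid as an
element of `F ⋊ B`, where the free group `F` records the path of the last strand and the remaining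
pure braid `B` acts on `F` trivially modulo commutators. Hence `F ⋊ B` acts on `ℚ[F]` by operators
that are unipotent for the filtration by powers of the augmentation ideal, and in characteristic
zero such operators with equal `k`-th powers agree modulo every step of the filtration. Distinct
elements of `F` are not congruent modulo all powers of the augmentation ideal, because `F` embeds in
a group of transvections over a polynomial ring that are unipotent for the `X`-adic filtration.
-/

section UnipotentRoots

variable {R M : Type*} [Ring R] [AddCommGroup M] [Module R M]

/-- An endomorphism `u` is unipotent for a filtration `F` if `u - 1` maps each step of `F` into the
next one. -/
def IsUnipotentFor (F : ℕ → Submodule R M) (u : Module.End R M) : Prop :=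
  ∀ n, ∀ x ∈ F n, u x - x ∈ F (n + 1)

variable {F : ℕ → Submodule R M} {u v : Module.End R M}

lemma isUnipotentFor_one : IsUnipotentFor F 1 := by
  simp [IsUnipotentFor]

lemma IsUnipotentFor.apply_mem (hF : Antitone F) (hu : IsUnipotentFor F u) {n : ℕ} {x : M}
    (hx : x ∈ F n) : u x ∈ F n := by
  simpa using add_mem (hF n.le_succ (hu n x hx)) hx

lemma IsUnipotentFor.mul (hF : Antitone F) (hu : IsUnipotentFor F u) (hv : IsUnipotentFor F v) :
    IsUnipotentFor F (u * v) := by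
  intro n x hx
  rw [Module.End.mul_apply, ← sub_add_sub_cancel _ (v x)]
  exact add_mem (hu n _ (hv.apply_mem hF hx)) (hv n x hx)

lemma IsUnipotentFor.pow (hF : Antitone F) (hu : IsUnipotentFor F u) (j : ℕ) :
    IsUnipotentFor F (u ^ j) := by
  induction j with
  | zero => simpa using isUnipotentFor_one
  | succ j ih => simpa only [pow_succ] using ih.mul hF hu

lemma IsUnipotentFor.pow_sub_pow_sub_nsmul_apply_mem (hF : Antitone F) (hu : IsUnipotentFor F u)
    (hv : IsUnipotentFor F v) {s : ℕ} (h : ∀ n, ∀ x ∈ F n, u x - v x ∈ F (n + s)) (j : ℕ)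
    {n : ℕ} {x : M} (hx : x ∈ F n) :
    (u ^ j) x - (v ^ j) x - j • (u x - v x) ∈ F (n + s + 1) := by
  induction j with
  | zero => simp
  | succ j ih =>
    have hdiff : (u ^ j) x - (v ^ j) x ∈ F (n + s) := by
      simpa using add_mem (hF (n + s).le_succ ih) ((F (n + s)).nsmul_mem (h n x hx) j)
    have hvx := h (n + 1) _ (hv.pow hF j n x hx)
    rw [add_right_comm] at hvx
    have expand : (u ^ (j + 1)) x - (v ^ (j + 1)) x - (j + 1) • (u x - v x) =
        (u ((u ^ j) x - (v ^ j) x) - ((u ^ j) x - (v ^ j) x)) +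
        (u ((v ^ j) x - x) - v ((v ^ j) x - x)) +
        ((u ^ j) x - (v ^ j) x - j • (u x - v x)) := by
      simp only [pow_succ', Module.End.mul_apply, map_sub, succ_nsmul]
      abel
    rw [expand]
    exact add_mem (add_mem (hu _ _ hdiff) hvx) ih

lemma IsUnipotentFor.sub_apply_mem_of_pow_eq {K V : Type*} [DivisionRing K] [CharZero K]
    [AddCommGroup V] [Module K V] {F : ℕ → Submodule K V} {u v : Module.End K V}
    (hF : Antitone F) (hu : IsUnipotentFor F u) (hv : IsUnipotentFor F v) {k : ℕ}
    (hk : k ≠ 0) (h : u ^ k = v ^ k) (s n : ℕ) :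
    ∀ x ∈ F n, u x - v x ∈ F (n + s) := by
  induction s generalizing n with
  | zero =>
    intro x hx
    rw [← sub_sub_sub_cancel_right _ _ x]
    exact hF n.le_succ (sub_mem (hu n x hx) (hv n x hx))
  | succ s ih =>
    intro x hx
    have hmem := hu.pow_sub_pow_sub_nsmul_apply_mem hF hv ih k hx
    rw [h, sub_self, zero_sub, neg_mem_iff, ← Nat.cast_smul_eq_nsmul K] at hmem
    exact ((F _).smul_mem_iff (Nat.cast_ne_zero.mpr hk)).mp hmem

end UnipotentRoots

section Augmentation

variable {G : Type*} [Group G]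

/-- The augmentation `ℚ[G] → ℚ`, sending a formal sum to the sum of its coefficients. -/
noncomputable def augmentation (G : Type*) [Group G] : MonoidAlgebra ℚ G →ₐ[ℚ] ℚ :=
  MonoidAlgebra.lift ℚ ℚ G 1

/-- The augmentation ideal of `ℚ[G]`; its powers filter `ℚ[G]`. -/
noncomputable def augmentationIdeal (G : Type*) [Group G] : Ideal (MonoidAlgebra ℚ G) :=
  RingHom.ker (augmentation G)

instance augmentationIdeal_isTwoSided : (augmentationIdeal G).IsTwoSided :=
  inferInstanceAs (RingHom.ker (augmentation G)).IsTwoSided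

open MonoidAlgebra (of)

lemma of_sub_of_mem_augmentationIdeal (g h : G) : of ℚ G g - of ℚ G h ∈ augmentationIdeal G := by
  simp [augmentationIdeal, augmentation, RingHom.mem_ker]

lemma antitone_augmentationIdeal_pow :
    Antitone fun n => (augmentationIdeal G ^ n).restrictScalars ℚ :=
  fun _ _ h => Ideal.pow_le_pow_right h

lemma mul_mem_augmentationIdeal_pow_succ {a x : MonoidAlgebra ℚ G} {n : ℕ}
    (ha : a ∈ augmentationIdeal G) (hx : x ∈ augmentationIdeal G ^ n) :
    a * x ∈ augmentationIdeal G ^ (n + 1) := by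
  rw [Ideal.IsTwoSided.pow_succ]
  exact Ideal.mul_mem_mul ha hx

/-- The homomorphism `g ↦ g - 1` from `G` to the additive group of `ℚ[G]` modulo the square of the
augmentation ideal. Its codomain is commutative, so it factors through the abelianization. -/
noncomputable def augmentationSquareHom (G : Type*) [Group G] :
    G →* Multiplicative (MonoidAlgebra ℚ G ⧸ augmentationIdeal G ^ 2) where
  toFun g := Multiplicative.ofAdd (Ideal.Quotient.mk _ (of ℚ G g - 1))
  map_one' := by rw [map_one, sub_self, map_zero, ofAdd_zero]
  map_mul' g h := by
    have expand : of ℚ G (g * h) - 1 - (of ℚ G g - 1 + (of ℚ G h - 1)) =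
        (of ℚ G g - of ℚ G 1) * (of ℚ G h - of ℚ G 1) := by
      rw [map_mul, map_one]
      noncomm_ring
    rw [← ofAdd_add, ← map_add, EmbeddingLike.apply_eq_iff_eq,
      Ideal.Quotient.mk_eq_mk_iff_sub_mem, expand, Ideal.IsTwoSided.pow_succ, Submodule.pow_one]
    exact Ideal.mul_mem_mul (of_sub_of_mem_augmentationIdeal g 1)
      (of_sub_of_mem_augmentationIdeal h 1)

lemma of_sub_of_mem_augmentationIdeal_sq {g h : G}
    (hgh : Abelianization.of g = Abelianization.of h) :
    of ℚ G g - of ℚ G h ∈ augmentationIdeal G ^ 2 := by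
  have hmk := congrArg (Abelianization.lift (augmentationSquareHom G)) hgh
  simp only [Abelianization.lift_apply_of] at hmk
  rw [← sub_sub_sub_cancel_right _ _ 1]
  exact (Ideal.Quotient.mk_eq_mk_iff_sub_mem _ _).mp (Multiplicative.ofAdd.injective hmk)

variable {φ : G →* G}

lemma mapDomainAlgHom_sub_mem_augmentationIdeal_sq
    (hφ : ∀ g, Abelianization.of (φ g) = Abelianization.of g) (z : MonoidAlgebra ℚ G) :
    MonoidAlgebra.mapDomainAlgHom ℚ ℚ φ z - z ∈ augmentationIdeal G ^ 2 := by
  induction z using MonoidAlgebra.induction_on with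
  | of g =>
    simpa using of_sub_of_mem_augmentationIdeal_sq (hφ g)
  | add x y hx hy =>
    rw [map_add, add_sub_add_comm]
    exact add_mem hx hy
  | smul r x hx =>
    rw [map_smul, ← smul_sub]
    exact ((augmentationIdeal G ^ 2).restrictScalars ℚ).smul_mem r hx

lemma isUnipotentFor_mapDomainAlgHom
    (hφ : ∀ g, Abelianization.of (φ g) = Abelianization.of g) :
    IsUnipotentFor (fun n => (augmentationIdeal G ^ n).restrictScalars ℚ)
      (MonoidAlgebra.mapDomainAlgHom ℚ ℚ φ).toLinearMap := by
  intro n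
  induction n with
  | zero =>
    intro x _
    exact Ideal.pow_le_pow_right one_le_two (mapDomainAlgHom_sub_mem_augmentationIdeal_sq hφ x)
  | succ n ih =>
    intro x hx
    change x ∈ augmentationIdeal G ^ (n + 1) at hx
    change _ ∈ augmentationIdeal G ^ (n + 2)
    rw [Ideal.IsTwoSided.pow_succ] at hx
    induction hx using Submodule.mul_induction_on' with
    | mem_mul_mem a ha b hb =>
      set Φ := MonoidAlgebra.mapDomainAlgHom ℚ ℚ φ
      have expand : Φ (a * b) - a * b = (Φ a - a) * Φ b + a * (Φ b - b) := by
        rw [map_mul]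
        noncomm_ring
      have hb' : Φ b ∈ augmentationIdeal G ^ n := by
        simpa using add_mem (Ideal.pow_le_pow_right n.le_succ (ih b hb)) hb
      rw [AlgHom.toLinearMap_apply, expand]
      refine add_mem ?_ ?_
      · rw [add_comm n 2, Ideal.IsTwoSided.pow_add]
        exact Ideal.mul_mem_mul (mapDomainAlgHom_sub_mem_augmentationIdeal_sq hφ a) hb'
      · exact mul_mem_augmentationIdeal_pow_succ ha (ih b hb)
    | add a _ b _ ha hb =>
      rw [map_add, add_sub_add_comm]
      exact add_mem ha hb

/-- The group elements are separated in `ℚ[G]` by the powers of the augmentation ideal. -/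
def AugmentationSeparated (G : Type*) [Group G] : Prop :=
  ∀ g h : G, (∀ n, of ℚ G g - of ℚ G h ∈ augmentationIdeal G ^ n) → g = h

section UnipotentRepresentation

variable {M : Type*} [AddCommGroup M] [Module ℚ M] {F : ℕ → Submodule ℚ M}
  {ρ : G →* Module.End ℚ M}

lemma lift_apply_sub_augmentation_smul_mem (hρ : ∀ g, IsUnipotentFor F (ρ g))
    (z : MonoidAlgebra ℚ G) {n : ℕ} {x : M} (hx : x ∈ F n) :
    MonoidAlgebra.lift ℚ _ G ρ z x - augmentation G z • x ∈ F (n + 1) := by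
  induction z using MonoidAlgebra.induction_on with
  | of g => simpa [augmentation] using hρ g n x hx
  | add y z hy hz =>
    rw [map_add, map_add, LinearMap.add_apply, add_smul, add_sub_add_comm]
    exact add_mem hy hz
  | smul r z hz =>
    rw [map_smul, map_smul, LinearMap.smul_apply, smul_assoc, ← smul_sub]
    exact (F (n + 1)).smul_mem r hz

lemma lift_apply_mem_of_mem_augmentationIdeal_pow (hρ : ∀ g, IsUnipotentFor F (ρ g)) (n : ℕ)
    {m : ℕ} {z : MonoidAlgebra ℚ G} (hz : z ∈ augmentationIdeal G ^ n) {x : M} (hx : x ∈ F m)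
    (hF : Antitone F) :
    MonoidAlgebra.lift ℚ _ G ρ z x ∈ F (m + n) := by
  induction n generalizing z with
  | zero =>
    simpa using add_mem (hF m.le_succ (lift_apply_sub_augmentation_smul_mem hρ z hx))
      ((F m).smul_mem (augmentation G z) hx)
  | succ n ih =>
    rw [Ideal.IsTwoSided.pow_succ] at hz
    induction hz using Submodule.mul_induction_on' with
    | mem_mul_mem a ha b hb =>
      rw [map_mul, Module.End.mul_apply]
      have hmem := lift_apply_sub_augmentation_smul_mem hρ a (ih hb)
      rwa [show augmentation G a = 0 from ha, zero_smul, sub_zero] at hmem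
    | add a _ b _ ha hb =>
      rw [map_add, LinearMap.add_apply]
      exact add_mem ha hb

lemma AugmentationSeparated.of_unipotent (hF : Antitone F) (hF₀ : F 0 = ⊤) (hFinf : ⨅ n, F n = ⊥)
    (hρ : ∀ g, IsUnipotentFor F (ρ g)) (hinj : Function.Injective ρ) :
    AugmentationSeparated G := by
  intro g h hgh
  refine hinj (LinearMap.ext fun x => sub_eq_zero.mp ?_)
  rw [← Submodule.mem_bot ℚ, ← hFinf, Submodule.mem_iInf]
  intro n
  have hx : x ∈ F 0 := hF₀ ▸ Submodule.mem_top
  simpa using lift_apply_mem_of_mem_augmentationIdeal_pow hρ n (hgh n) hx hF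

end UnipotentRepresentation

end Augmentation

section SlopeTransvection

open Polynomial

lemma transvection_zpow_apply {R V : Type*} [CommRing R] [AddCommGroup V] [Module R V]
    {f : Module.Dual R V} {v : V} (h : f v = 0) (n : ℤ) (x : V) :
    (LinearEquiv.transvection h ^ n) x = x + n • f x • v := by
  induction n generalizing x with
  | zero => simp
  | succ n ih =>
    rw [zpow_add_one, LinearEquiv.mul_apply, LinearEquiv.transvection.apply, ih]
    simp [h, add_smul, add_assoc, add_comm]
  | pred n ih =>
    rw [zpow_sub_one, LinearEquiv.mul_apply, LinearEquiv.transvection.inv_eq h (by simp [h]),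
      LinearEquiv.transvection.apply, ih]
    simp [h, sub_smul, add_assoc]
    abel

variable {R : Type*} [CommRing R]

/-- The linear form on `R[X]²` whose kernel is the line of slope `a`. -/
noncomputable def slopeForm (a : R) : Module.Dual R[X] (R[X] × R[X]) :=
  LinearMap.snd _ _ _ - C a • LinearMap.fst _ _ _

@[simp]
lemma slopeForm_apply (a : R) (w : R[X] × R[X]) : slopeForm a w = w.2 - C a * w.1 := rfl

lemma X_smul_slopeForm_apply_self (a : R) : ((X : R[X]) • slopeForm a) (1, C a) = 0 := by
  simp

/-- The transvection `w ↦ w + (X * slopeForm a w) • (1, a)` fixing the line of slope `a`. These are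
unipotent for the `X`-adic filtration, and different slopes generate a free group. -/
noncomputable def slopeTransvection (a : R) : (R[X] × R[X]) ≃ₗ[R[X]] R[X] × R[X] :=
  LinearEquiv.transvection (X_smul_slopeForm_apply_self a)

lemma slopeTransvection_zpow_apply (a : R) (n : ℤ) (w : R[X] × R[X]) :
    (slopeTransvection a ^ n) w = w + n • (X * slopeForm a w) • (1, C a) :=
  transvection_zpow_apply _ n w

/-- The vectors of `R[X]²` whose slope tends to `a` as `X → ∞`: the ping-pong table of
`slopeTransvection a`. -/
def slopeNbhd (a : R) : Set (R[X] × R[X]) :=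
  {w | (slopeForm a w).degree < w.1.degree}

lemma slopeForm_eq_add (a b : R) (w : R[X] × R[X]) :
    slopeForm a w = slopeForm b w + C (b - a) * w.1 := by
  simp only [slopeForm_apply, C_sub]
  ring

lemma degree_slopeForm_of_mem_slopeNbhd [IsDomain R] {a b : R} (hab : a ≠ b) {w : R[X] × R[X]}
    (hw : w ∈ slopeNbhd b) : (slopeForm a w).degree = w.1.degree := by
  have hdeg : (C (b - a) * w.1).degree = w.1.degree :=
    degree_C_mul (sub_ne_zero.mpr hab.symm)
  rw [slopeForm_eq_add a b, degree_add_eq_right_of_degree_lt (hdeg ▸ hw), hdeg]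

lemma disjoint_slopeNbhd [IsDomain R] {a b : R} (hab : a ≠ b) :
    Disjoint (slopeNbhd a) (slopeNbhd b) :=
  Set.disjoint_left.mpr fun _ ha hb => ha.ne (degree_slopeForm_of_mem_slopeNbhd hab hb)

lemma slopeTransvection_zpow_apply_mem_slopeNbhd [IsDomain R] [CharZero R] {a b : R} (hab : a ≠ b)
    {n : ℤ} (hn : n ≠ 0) {w : R[X] × R[X]} (hw : w ∈ slopeNbhd b) :
    (slopeTransvection a ^ n) w ∈ slopeNbhd a := by
  have hdeg := degree_slopeForm_of_mem_slopeNbhd hab hw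
  have hne : slopeForm a w ≠ 0 := by
    rw [← degree_ne_bot, hdeg]
    exact hw.ne_bot
  have hgrow : w.1.degree < (C (n : R) * (X * slopeForm a w)).degree := by
    rw [degree_C_mul (Int.cast_ne_zero.mpr hn), X_mul, degree_mul_X, ← hdeg,
      degree_eq_natDegree hne]
    exact_mod_cast Nat.lt_succ_self _
  have hfst : ((slopeTransvection a ^ n) w).1 = w.1 + C (n : R) * (X * slopeForm a w) := by
    simp [slopeTransvection_zpow_apply]
  have hform : slopeForm a ((slopeTransvection a ^ n) w) = slopeForm a w := by
    rw [slopeTransvection_zpow_apply, map_add, map_zsmul, map_smul]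
    simp only [slopeForm_apply (w := (1, C a)), mul_one, sub_self, smul_zero, add_zero]
  change (slopeForm a _).degree < _
  rwa [hform, hfst, degree_add_eq_right_of_degree_lt hgrow, hdeg]

open scoped Pointwise in
lemma lift_slopeTransvection_injective [IsDomain R] [CharZero R] :
    Function.Injective (FreeGroup.lift (slopeTransvection (R := R))) := by
  have hfactor : FreeGroup.lift (slopeTransvection (R := R)) =
      (Monoid.CoprodI.lift fun a => FreeGroup.lift fun _ : Unit => slopeTransvection a).comp
        (@freeGroupEquivCoprodI R).toMonoidHom := by
    ext1 a
    simp
  rw [hfactor, MonoidHom.coe_comp]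
  refine Function.Injective.comp ?_ freeGroupEquivCoprodI.injective
  refine Monoid.CoprodI.lift_injective_of_ping_pong _ ?_ slopeNbhd ?_ ?_ ?_
  · exact .inl (Cardinal.natCast_lt_aleph0.le.trans (Cardinal.aleph0_le_mk R))
  · exact fun a => ⟨(1, C a), by simp [slopeNbhd]⟩
  · exact fun a b hab => disjoint_slopeNbhd hab
  · rintro a b hab h hh _ ⟨w, hw, rfl⟩
    obtain ⟨n, rfl⟩ := FreeGroup.freeGroupUnitEquivInt.symm.surjective h
    have hn : n ≠ 0 := by
      rintro rfl
      exact hh (zpow_zero _)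
    simpa [FreeGroup.freeGroupUnitEquivInt] using
      slopeTransvection_zpow_apply_mem_slopeNbhd hab hn hw

variable [Algebra ℚ R]

/-- The `X`-adic filtration of `R[X]²`, as a filtration by rational subspaces. -/
noncomputable def xAdicFiltration (R : Type*) [CommRing R] [Algebra ℚ R] (n : ℕ) :
    Submodule ℚ (R[X] × R[X]) :=
  ((Ideal.span {X ^ n}).prod (Ideal.span {X ^ n})).restrictScalars ℚ

lemma mem_xAdicFiltration {n : ℕ} {w : R[X] × R[X]} :
    w ∈ xAdicFiltration R n ↔ X ^ n ∣ w.1 ∧ X ^ n ∣ w.2 := by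
  simp [xAdicFiltration, Ideal.mem_span_singleton]

lemma antitone_xAdicFiltration : Antitone (xAdicFiltration R) := by
  intro m n hmn w hw
  rw [mem_xAdicFiltration] at hw ⊢
  exact hw.imp (pow_dvd_pow X hmn).trans (pow_dvd_pow X hmn).trans

lemma iInf_xAdicFiltration : ⨅ n, xAdicFiltration R n = ⊥ := by
  have eq_zero_of_forall_X_pow_dvd (p : R[X]) (hp : ∀ n, X ^ n ∣ p) : p = 0 :=
    ext fun n => X_pow_dvd_iff.mp (hp (n + 1)) n n.lt_succ_self
  refine (Submodule.eq_bot_iff _).mpr fun w hw => ?_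
  simp only [Submodule.mem_iInf, mem_xAdicFiltration] at hw
  exact Prod.ext (eq_zero_of_forall_X_pow_dvd _ fun n => (hw n).1)
    (eq_zero_of_forall_X_pow_dvd _ fun n => (hw n).2)

lemma isUnipotentFor_slopeTransvection_zpow (a : R) (n : ℤ) :
    IsUnipotentFor (xAdicFiltration R)
      (DistribMulAction.toModuleEnd ℚ _ (slopeTransvection a ^ n)) := by
  intro m w hw
  rw [mem_xAdicFiltration] at hw
  have hform : X ^ (m + 1) ∣ X * slopeForm a w := by
    rw [pow_succ']
    exact mul_dvd_mul_left X (dvd_sub hw.2 (hw.1.mul_left _))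
  have hdiff : (slopeTransvection a ^ n) w - w =
      (X * slopeForm a w * (n : R[X]), X * slopeForm a w * ((n : R[X]) * C a)) := by
    rw [slopeTransvection_zpow_apply, add_sub_cancel_left]
    ext1 <;> simp <;> ring
  change (slopeTransvection a ^ n) w - w ∈ _
  rw [hdiff, mem_xAdicFiltration]
  exact ⟨hform.mul_right _, hform.mul_right _⟩

lemma isUnipotentFor_lift_slopeTransvection (g : FreeGroup R) :
    IsUnipotentFor (xAdicFiltration R)
      (DistribMulAction.toModuleEnd ℚ _ (FreeGroup.lift slopeTransvection g)) := by
  induction g using FreeGroup.induction_on with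
  | C1 => simpa only [map_one] using isUnipotentFor_one
  | of a => simpa using isUnipotentFor_slopeTransvection_zpow a 1
  | inv_of a _ => simpa using isUnipotentFor_slopeTransvection_zpow a (-1)
  | mul g h hg hh => simpa only [map_mul] using hg.mul antitone_xAdicFiltration hh

theorem augmentationSeparated_freeGroup (α : Type*) : AugmentationSeparated (FreeGroup α) := by
  let ρ : FreeGroup α →* Module.End ℚ ((MvPolynomial α ℚ)[X] × (MvPolynomial α ℚ)[X]) :=
    (DistribMulAction.toModuleEnd ℚ _).comp
      ((FreeGroup.lift slopeTransvection).comp (FreeGroup.map (MvPolynomial.X (R := ℚ))))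
  refine .of_unipotent (ρ := ρ) antitone_xAdicFiltration ?_ iInf_xAdicFiltration
    (fun g => isUnipotentFor_lift_slopeTransvection _) ?_
  · ext
    simp [mem_xAdicFiltration]
  · exact fun g h hgh => FreeGroup.map_injective MvPolynomial.X_injective
      (lift_slopeTransvection_injective (LinearEquiv.ext fun w => LinearMap.congr_fun hgh w))

end SlopeTransvection

section SemidirectProduct

open MonoidAlgebra (of)

variable {G H : Type*} [Group G] [Group H] {φ : H →* MulAut G}

/-- The representation of `G ⋊[φ] H` on `ℚ[G]` in which `G` acts by left multiplication and `H`
through `φ`. -/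
noncomputable def semidirectRep (φ : H →* MulAut G) :
    G ⋊[φ] H →* Module.End ℚ (MonoidAlgebra ℚ G) where
  toFun e := LinearMap.mulLeft ℚ (of ℚ G e.left) ∘ₗ
    (MonoidAlgebra.mapDomainAlgHom ℚ ℚ (φ e.right).toMonoidHom).toLinearMap
  map_one' := by
    ext g
    simp
  map_mul' e e' := by
    ext g
    simp [MonoidAlgebra.single_mul_single, mul_assoc]

lemma isUnipotentFor_semidirectRep {e : G ⋊[φ] H}
    (he : ∀ g, Abelianization.of (φ e.right g) = Abelianization.of g) :
    IsUnipotentFor (fun n => (augmentationIdeal G ^ n).restrictScalars ℚ)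
      (semidirectRep φ e) := by
  intro n x hx
  set Φ := MonoidAlgebra.mapDomainAlgHom ℚ ℚ (φ e.right).toMonoidHom
  have expand : semidirectRep φ e x - x =
      of ℚ G e.left * (Φ x - x) + (of ℚ G e.left - of ℚ G 1) * x := by
    rw [map_one, mul_sub, sub_mul, one_mul, sub_add_sub_cancel]
    rfl
  rw [expand]
  exact add_mem (Ideal.mul_mem_left _ _ (isUnipotentFor_mapDomainAlgHom he n x hx))
    (mul_mem_augmentationIdeal_pow_succ (of_sub_of_mem_augmentationIdeal _ _) hx)

lemma left_eq_of_pow_eq (hG : AugmentationSeparated G) {e e' : G ⋊[φ] H}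
    (he : ∀ g, Abelianization.of (φ e.right g) = Abelianization.of g)
    (he' : ∀ g, Abelianization.of (φ e'.right g) = Abelianization.of g)
    {k : ℕ} (hk : k ≠ 0) (h : e ^ k = e' ^ k) : e.left = e'.left := by
  refine hG _ _ fun n => ?_
  have hrep : semidirectRep φ e ^ k = semidirectRep φ e' ^ k := by rw [← map_pow, h, map_pow]
  have hmem := (isUnipotentFor_semidirectRep he).sub_apply_mem_of_pow_eq
    antitone_augmentationIdeal_pow (isUnipotentFor_semidirectRep he') hk hrep n 0 1
      (by rw [Submodule.pow_zero, Ideal.one_eq_top]; trivial)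
  simpa [semidirectRep] using hmem

end SemidirectProduct

section BraidGroup

variable {n : ℕ} {G : Type*} [Group G]

/-- The Artin generators of the braid group on `n + 1` strands, indexed from `0` by natural numbers
and equal to `1` for `i ≥ n`. -/
def sigma (n i : ℕ) : BraidGroup (n + 1) :=
  if h : i < n then PresentedGroup.of (rels := braidRels (n + 1)) ⟨i, h⟩ else 1

lemma sigma_val (i : Fin n) : sigma n i = PresentedGroup.of (rels := braidRels (n + 1)) i := by
  simp [sigma]

lemma commute_sigma {i j : ℕ} (h : i + 2 ≤ j) : Commute (sigma n i) (sigma n j) := by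
  by_cases hj : j < n
  · have hi : i < n := by omega
    rw [sigma, sigma, dif_pos hi, dif_pos hj]
    exact PresentedGroup.mk_eq_mk_of_mul_inv_mem (Or.inl ⟨⟨i, hi⟩, ⟨j, hj⟩, Or.inl h, rfl⟩)
  · rw [sigma.eq_def n j, dif_neg hj]
    exact .one_right _

lemma sigma_mul_sigma_mul_sigma {i : ℕ} (h : i + 1 < n) :
    sigma n i * sigma n (i + 1) * sigma n i = sigma n (i + 1) * sigma n i * sigma n (i + 1) := by
  have hi : i < n := by omega
  rw [sigma, sigma, dif_pos hi, dif_pos h]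
  exact PresentedGroup.mk_eq_mk_of_mul_inv_mem (Or.inr ⟨⟨i, hi⟩, ⟨i + 1, h⟩, Or.inl rfl, rfl⟩)

/-- A family of group elements satisfying the braid relations, that is, a family of images for the
Artin generators under a homomorphism from the braid group on `n + 1` strands. -/
structure IsBraidFamily (f : Fin n → G) : Prop where
  commute : ∀ i j : Fin n, i.val + 2 ≤ j.val → Commute (f i) (f j)
  braid : ∀ i j : Fin n, i.val + 1 = j.val → f i * f j * f i = f j * f i * f j

/-- The homomorphism out of the braid group determined by a family satisfying the braid
relations. -/
def IsBraidFamily.lift {f : Fin n → G} (hf : IsBraidFamily f) : BraidGroup (n + 1) →* G :=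
  PresentedGroup.toGroup (rels := braidRels (n + 1)) (f := f) (by
    rintro r (⟨i, j, hij | hij, rfl⟩ | ⟨i, j, hij | hij, rfl⟩) <;>
      simp only [map_mul, map_inv, FreeGroup.lift_apply_of, mul_inv_eq_one]
    · exact hf.commute i j hij
    · exact (hf.commute j i hij).symm
    · exact hf.braid i j hij
    · exact (hf.braid j i hij).symm)

@[simp]
lemma IsBraidFamily.lift_sigma {f : Fin n → G} (hf : IsBraidFamily f) (i : Fin n) :
    hf.lift (sigma n i) = f i := by
  rw [sigma_val]
  exact PresentedGroup.toGroup.of _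

lemma braid_induction {P : BraidGroup (n + 1) → Prop} (one : P 1)
    (sigma : ∀ i : Fin n, P (sigma n i)) (mul : ∀ a b, P a → P b → P (a * b))
    (inv : ∀ a, P a → P a⁻¹) (b : BraidGroup (n + 1)) : P b := by
  have hb : b ∈ Subgroup.closure (Set.range (PresentedGroup.of (rels := braidRels (n + 1)))) := by
    rw [PresentedGroup.closure_range_of]
    trivial
  induction hb using Subgroup.closure_induction with
  | mem _ h =>
    obtain ⟨i, rfl⟩ := h
    exact sigma_val (n := n) i ▸ sigma i
  | one => exact one
  | mul a b _ _ ha hb => exact mul a b ha hb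
  | inv a _ ha => exact inv a ha

lemma isBraidFamily_sigma {m : ℕ} (h : n ≤ m) : IsBraidFamily fun i : Fin n => sigma m i where
  commute _ _ hij := commute_sigma hij
  braid i j hij := by
    rw [← hij]
    exact sigma_mul_sigma_mul_sigma (by omega)

lemma isBraidFamily_swap :
    IsBraidFamily fun i : Fin n => Equiv.swap i.castSucc i.succ where
  commute i j hij := (Equiv.Perm.disjoint_swap_swap (by simp [Fin.ext_iff]; omega)).commute
  braid i j hij := by
    have hadj : i.succ = j.castSucc := Fin.ext hij
    have hij' : i.castSucc ≠ j.castSucc := Fin.ne_of_val_ne (by dsimp; omega)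
    have hik : i.castSucc ≠ j.succ := Fin.ne_of_val_ne (by dsimp; omega)
    have hjk : j.castSucc ≠ j.succ := Fin.castSucc_lt_succ.ne
    rw [hadj, Equiv.swap_mul_swap_mul_swap hij' hik, Equiv.swap_comm i.castSucc j.castSucc,
      Equiv.swap_comm j.castSucc j.succ, Equiv.swap_mul_swap_mul_swap hjk.symm hik.symm,
      Equiv.swap_comm]

/-- The permutation of the `n + 1` strands induced by a braid. -/
def strandPerm (n : ℕ) : BraidGroup (n + 1) →* Equiv.Perm (Fin (n + 1)) :=
  isBraidFamily_swap.lift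

@[simp]
lemma strandPerm_sigma (i : Fin n) :
    strandPerm n (sigma n i) = Equiv.swap i.castSucc i.succ :=
  isBraidFamily_swap.lift_sigma i

/-- The pure braid group on `n + 1` strands. -/
def pureBraidGroup (n : ℕ) : Subgroup (BraidGroup (n + 1)) := (strandPerm n).ker

instance normal_pureBraidGroup (n : ℕ) : (pureBraidGroup n).Normal := MonoidHom.normal_ker _

lemma mem_pureBraidGroup {b : BraidGroup (n + 1)} :
    b ∈ pureBraidGroup n ↔ strandPerm n b = 1 := MonoidHom.mem_ker

/-- The homomorphism adding a straight last strand to a braid on `n + 1` strands. -/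
def addStrand (n : ℕ) : BraidGroup (n + 1) →* BraidGroup (n + 2) :=
  (isBraidFamily_sigma n.le_succ).lift

@[simp]
lemma addStrand_sigma (i : Fin n) : addStrand n (sigma n i) = sigma (n + 1) i :=
  (isBraidFamily_sigma n.le_succ).lift_sigma i

lemma strandPerm_addStrand_castSucc (b : BraidGroup (n + 1)) (k : Fin (n + 1)) :
    strandPerm (n + 1) (addStrand n b) k.castSucc = (strandPerm n b k).castSucc := by
  induction b using braid_induction generalizing k with
  | one => simp
  | sigma i =>
    have hi : addStrand n (sigma n i) = sigma (n + 1) i.castSucc := addStrand_sigma i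
    rw [hi, strandPerm_sigma, strandPerm_sigma, Fin.succ_castSucc,
      (Fin.castSucc_injective (n + 1)).swap_apply]
  | mul a b ha hb => simp [ha, hb]
  | inv a ha =>
    rw [map_inv, map_inv, map_inv, Equiv.Perm.inv_eq_iff_eq, ha, ← Equiv.Perm.mul_apply,
      mul_inv_cancel, Equiv.Perm.one_apply]

end BraidGroup

section ArtinAction

open FreeGroup (of)

variable {α : Type*}

lemma mulAut_freeGroup_ext {φ ψ : MulAut (FreeGroup α)} (h : ∀ i, φ (of i) = ψ (of i)) : φ = ψ :=
  MulEquiv.toMonoidHom_injective (FreeGroup.ext_hom _ _ h)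

variable [DecidableEq α]

/-- The automorphism `a ↦ a⁻¹ b a`, `b ↦ a` of the free group fixing the other generators, by which
an Artin generator acts on the fundamental group of the punctured disc. -/
def artinAut {a b : α} (hab : a ≠ b) : MulAut (FreeGroup α) :=
  MonoidHom.toMulEquiv
    (FreeGroup.lift fun i => if i = b then of a else if i = a then (of a)⁻¹ * of b * of a else of i)
    (FreeGroup.lift fun i => if i = a then of b else if i = b then of b * of a * (of b)⁻¹ else of i)
    (by
      ext i
      rcases eq_or_ne i b with rfl | hb <;> rcases eq_or_ne i a with rfl | ha <;>
        simp_all [mul_assoc])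
    (by
      ext i
      rcases eq_or_ne i a with rfl | ha <;> rcases eq_or_ne i b with rfl | hb <;>
        simp_all [mul_assoc])

variable {a b c d : α}

@[simp]
lemma artinAut_of_left (hab : a ≠ b) : artinAut hab (of a) = (of a)⁻¹ * of b * of a := by
  simp [artinAut, hab]

@[simp]
lemma artinAut_of_right (hab : a ≠ b) : artinAut hab (of b) = of a := by
  simp [artinAut]

lemma artinAut_of_ne (hab : a ≠ b) {i : α} (hia : i ≠ a) (hib : i ≠ b) :
    artinAut hab (of i) = of i := by
  simp [artinAut, hia, hib]

lemma commute_artinAut {hab : a ≠ b} {hcd : c ≠ d} (hac : a ≠ c) (had : a ≠ d)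
    (hbc : b ≠ c) (hbd : b ≠ d) : Commute (artinAut hab) (artinAut hcd) := by
  refine mulAut_freeGroup_ext fun i => ?_
  rw [MulAut.mul_apply, MulAut.mul_apply]
  by_cases hia : i = a
  · subst hia
    simp [artinAut_of_ne, *]
  by_cases hib : i = b
  · subst hib
    simp [artinAut_of_ne, *]
  by_cases hic : i = c
  · subst hic
    simp [artinAut_of_ne, hac.symm, had.symm, hbc.symm, hbd.symm]
  by_cases hid : i = d
  · subst hid
    simp [artinAut_of_ne, hac.symm, had.symm, hbc.symm, hbd.symm]
  simp [artinAut_of_ne, *]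

lemma artinAut_mul_artinAut_mul_artinAut {hab : a ≠ b} {hbc : b ≠ c} (hac : a ≠ c) :
    artinAut hab * artinAut hbc * artinAut hab = artinAut hbc * artinAut hab * artinAut hbc := by
  refine mulAut_freeGroup_ext fun i => ?_
  simp only [MulAut.mul_apply]
  by_cases hia : i = a
  · subst hia
    simp [artinAut_of_ne, hab, hac, hac.symm, hbc.symm, mul_assoc]
  by_cases hib : i = b
  · subst hib
    simp [artinAut_of_ne, hab, hac, hac.symm, hbc.symm]
  by_cases hic : i = c
  · subst hic
    simp [artinAut_of_ne, hab, hac, hac.symm, hbc.symm]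
  simp [artinAut_of_ne, *]

end ArtinAction

section BraidAction

open FreeGroup (of)

variable {n : ℕ}

lemma isBraidFamily_artinAut :
    IsBraidFamily fun i : Fin n => artinAut (Fin.castSucc_lt_succ (i := i)).ne where
  commute i j hij := by
    apply commute_artinAut <;> simp [Fin.ext_iff] <;> omega
  braid i j hij := by
    have hadj : i.succ = j.castSucc := Fin.ext hij
    have hik : i.castSucc ≠ j.succ := Fin.ne_of_val_ne (by dsimp; omega)
    simp only [hadj]
    exact artinAut_mul_artinAut_mul_artinAut hik

/-- The Artin representation of the braid group on `n + 1` strands by automorphisms of the free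
group of rank `n + 1`. -/
def artinAction (n : ℕ) : BraidGroup (n + 1) →* MulAut (FreeGroup (Fin (n + 1))) :=
  isBraidFamily_artinAut.lift

@[simp]
lemma artinAction_sigma (i : Fin n) :
    artinAction n (sigma n i) = artinAut (Fin.castSucc_lt_succ (i := i)).ne :=
  isBraidFamily_artinAut.lift_sigma i

lemma isConj_artinAut_of {α : Type*} [DecidableEq α] {a b : α} (hab : a ≠ b) (i : α) :
    IsConj (of (Equiv.swap a b i)) (artinAut hab (of i)) := by
  by_cases hia : i = a
  · subst hia
    exact isConj_iff.mpr ⟨(of i)⁻¹, by simp⟩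
  by_cases hib : i = b
  · subst hib
    rw [Equiv.swap_apply_right, artinAut_of_right]
  rw [Equiv.swap_apply_of_ne_of_ne hia hib, artinAut_of_ne hab hia hib]

lemma isConj_artinAction_of (b : BraidGroup (n + 1)) (i : Fin (n + 1)) :
    IsConj (of (strandPerm n b i)) (artinAction n b (of i)) := by
  induction b using braid_induction generalizing i with
  | one => rw [map_one, map_one, Equiv.Perm.one_apply, MulAut.one_apply]
  | sigma j => simpa using isConj_artinAut_of _ i
  | mul a b ha hb =>
    simpa using (ha _).trans ((artinAction n a).toMonoidHom.map_isConj (hb i))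
  | inv a ha =>
    have h := ((artinAction n a)⁻¹).toMonoidHom.map_isConj (ha ((strandPerm n a)⁻¹ i))
    rw [← Equiv.Perm.mul_apply, mul_inv_cancel, Equiv.Perm.one_apply] at h
    simpa only [map_inv, MulEquiv.coe_toMonoidHom, MulAut.inv_apply_self] using h.symm

lemma abelianization_of_artinAction_of_pure {b : BraidGroup (n + 1)} (hb : b ∈ pureBraidGroup n)
    (x : FreeGroup (Fin (n + 1))) :
    Abelianization.of (artinAction n b x) = Abelianization.of x := by
  have hhom : Abelianization.of.comp (artinAction n b).toMonoidHom = Abelianization.of := by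
    ext i
    have hconj := Abelianization.of.map_isConj (isConj_artinAction_of b i)
    rw [isConj_iff_eq, mem_pureBraidGroup.mp hb, Equiv.Perm.one_apply] at hconj
    exact hconj.symm
  exact DFunLike.congr_fun hhom x

end BraidAction

section LastStrand

variable {n i j k : ℕ}

/-- The braid `σ_k σ_{k+1} ⋯ σ_n` (with `0`-based generators `σ_0, …, σ_n`). For `k ≤ n + 1` these
represent the cosets of the braids on `n + 2` strands in which the last strand returns to the last
place. -/
def cosetRep (n k : ℕ) : BraidGroup (n + 2) := ((List.Ico k (n + 1)).map (sigma (n + 1))).prod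

lemma sigma_mul_cosetRep (hk : k ≤ n) :
    sigma (n + 1) k * cosetRep n (k + 1) = cosetRep n k := by
  rw [cosetRep, cosetRep, List.Ico.eq_cons (by omega : k < n + 1), List.map_cons, List.prod_cons]

lemma cosetRep_last : cosetRep n (n + 1) = 1 := by
  rw [cosetRep, List.Ico.self_empty, List.map_nil, List.prod_nil]

lemma commute_sigma_cosetRep (hjk : j + 2 ≤ k) : Commute (sigma (n + 1) j) (cosetRep n k) := by
  refine Commute.list_prod_right _ _ fun b hb => ?_
  obtain ⟨i, hi, rfl⟩ := List.mem_map.mp hb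
  exact commute_sigma (hjk.trans (List.Ico.mem.mp hi).1)

lemma cosetRep_mul_sigma (hkj : k ≤ j) (hj : j < n) :
    cosetRep n k * sigma (n + 1) j = sigma (n + 1) (j + 1) * cosetRep n k := by
  induction hkj using Nat.decreasingInduction with
  | self =>
    rw [← sigma_mul_cosetRep hj.le, ← sigma_mul_cosetRep (Nat.succ_le_of_lt hj), mul_assoc,
      mul_assoc, ← (commute_sigma_cosetRep le_rfl).eq]
    simp only [← mul_assoc, sigma_mul_sigma_mul_sigma (Nat.succ_lt_succ hj)]
  | of_succ k hk ih =>
    rw [← sigma_mul_cosetRep (hk.le.trans hj.le), mul_assoc, ih, ← mul_assoc,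
      (commute_sigma (by omega)).eq, mul_assoc]

lemma semiconjBy_sq_of_braid {G : Type*} [Group G] {a b : G} (h : a * b * a = b * a * b) :
    SemiconjBy a (b ^ 2) (b⁻¹ * a ^ 2 * b) :=
  calc a * b ^ 2 = b⁻¹ * (b * a * b * b) := by simp only [sq, mul_assoc, inv_mul_cancel_left]
    _ = b⁻¹ * (a * b * a * b) := by rw [← h]
    _ = b⁻¹ * (a * (b * a * b)) := by simp only [mul_assoc]
    _ = b⁻¹ * a ^ 2 * b * a := by rw [← h]; simp only [sq, mul_assoc]

lemma commute_mul_sq_mul_of_braid {G : Type*} [Group G] {a b : G} (h : a * b * a = b * a * b) :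
    Commute a (b * a ^ 2 * b) :=
  calc a * (b * a ^ 2 * b) = a * b * a * (a * b) := by simp only [sq, mul_assoc]
    _ = b * a * (b * a * b) := by rw [h]; simp only [mul_assoc]
    _ = b * a ^ 2 * b * a := by rw [← h]; simp only [sq, mul_assoc]

/-- The pure braid on `n + 2` strands in which the last strand encircles strand `i` and all other
strands are straight. -/
def strandLoop (n i : ℕ) : BraidGroup (n + 2) :=
  (cosetRep n (i + 1))⁻¹ * sigma (n + 1) i ^ 2 * cosetRep n (i + 1)

lemma commute_sigma_strandLoop (hj : j < n) (hij : i ≠ j) (hij' : i ≠ j + 1) :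
    Commute (sigma (n + 1) j) (strandLoop n i) := by
  obtain hlt | hgt : i < j ∨ j + 2 ≤ i := by omega
  · have hshift : SemiconjBy (cosetRep n (i + 1)) (sigma (n + 1) j) (sigma (n + 1) (j + 1)) :=
      cosetRep_mul_sigma hlt hj
    have hfar : Commute (sigma (n + 1) (j + 1)) (sigma (n + 1) i ^ 2) :=
      ((commute_sigma (by omega)).pow_left 2).symm
    exact ((hshift.inv_symm_left.mul_left hfar.symm).mul_left hshift).symm
  · have hr : Commute (sigma (n + 1) j) (cosetRep n (i + 1)) := commute_sigma_cosetRep (by omega)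
    exact (hr.inv_right.mul_right ((commute_sigma hgt).pow_right 2)).mul_right hr

lemma strandLoop_of_lt (hi : i < n) :
    strandLoop n i = (cosetRep n (i + 2))⁻¹ *
      ((sigma (n + 1) (i + 1))⁻¹ * sigma (n + 1) i ^ 2 * sigma (n + 1) (i + 1)) *
        cosetRep n (i + 2) := by
  rw [strandLoop, ← sigma_mul_cosetRep (Nat.succ_le_of_lt hi)]
  group

lemma semiconjBy_sigma_strandLoop (hj : j < n) :
    SemiconjBy (sigma (n + 1) j) (strandLoop n (j + 1)) (strandLoop n j) := by
  have hr : Commute (sigma (n + 1) j) (cosetRep n (j + 2)) := commute_sigma_cosetRep le_rfl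
  rw [strandLoop_of_lt hj]
  exact (SemiconjBy.mul_right hr.inv_right
    (semiconjBy_sq_of_braid (sigma_mul_sigma_mul_sigma (Nat.succ_lt_succ hj)))).mul_right hr

lemma commute_sigma_strandLoop_mul_strandLoop (hj : j < n) :
    Commute (sigma (n + 1) j) (strandLoop n (j + 1) * strandLoop n j) := by
  have hr : Commute (sigma (n + 1) j) (cosetRep n (j + 2)) := commute_sigma_cosetRep le_rfl
  have hprod : strandLoop n (j + 1) * strandLoop n j = (cosetRep n (j + 2))⁻¹ *
      (sigma (n + 1) (j + 1) * sigma (n + 1) j ^ 2 * sigma (n + 1) (j + 1)) *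
        cosetRep n (j + 2) := by
    rw [strandLoop_of_lt hj, strandLoop]
    group
  rw [hprod]
  exact (hr.inv_right.mul_right
    (commute_mul_sq_mul_of_braid (sigma_mul_sigma_mul_sigma (Nat.succ_lt_succ hj)))).mul_right hr

open FreeGroup (of)

/-- The homomorphism sending the free generators to the loops of the last strand around the other
strands. -/
def loopHom (n : ℕ) : FreeGroup (Fin (n + 1)) →* BraidGroup (n + 2) :=
  FreeGroup.lift fun i => strandLoop n i

lemma loopHom_of (i : Fin (n + 1)) : loopHom n (of i) = strandLoop n i :=
  FreeGroup.lift_apply_of ..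

lemma loopHom_artinAut (j : Fin n) (i : Fin (n + 1)) :
    loopHom n (artinAut (Fin.castSucc_lt_succ (i := j)).ne (of i)) =
      sigma (n + 1) j * strandLoop n i * (sigma (n + 1) j)⁻¹ := by
  have hsemi := semiconjBy_sigma_strandLoop j.isLt
  rw [eq_mul_inv_iff_mul_eq]
  rcases eq_or_ne i j.castSucc with rfl | hleft
  · rw [artinAut_of_left, map_mul, map_mul, map_inv, loopHom_of, loopHom_of, Fin.val_succ,
      Fin.val_castSucc, mul_assoc, mul_assoc, inv_mul_eq_iff_eq_mul, ← mul_assoc, ← mul_assoc,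
      ← (commute_sigma_strandLoop_mul_strandLoop j.isLt).eq, ← hsemi.eq, mul_assoc]
  rcases eq_or_ne i j.succ with rfl | hright
  · rw [artinAut_of_right, loopHom_of]
    exact hsemi.symm
  · rw [artinAut_of_ne _ hleft hright, loopHom_of]
    exact (commute_sigma_strandLoop j.isLt (fun h => hleft (Fin.ext h))
      fun h => hright (Fin.ext h)).symm

lemma loopHom_artinAction (b : BraidGroup (n + 1)) (x : FreeGroup (Fin (n + 1))) :
    loopHom n (artinAction n b x) = addStrand n b * loopHom n x * (addStrand n b)⁻¹ := by
  induction b using braid_induction generalizing x with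
  | one => simp
  | sigma j =>
    have hhom : (loopHom n).comp (artinAction n (sigma n j)).toMonoidHom =
        (MulAut.conj (addStrand n (sigma n j))).toMonoidHom.comp (loopHom n) :=
      FreeGroup.ext_hom _ _ fun i => by
        simpa [loopHom_of] using loopHom_artinAut j i
    exact DFunLike.congr_fun hhom x
  | mul a b ha hb => simp [ha, hb, mul_assoc]
  | inv a ha =>
    have h := ha ((artinAction n a)⁻¹ x)
    rw [MulAut.apply_inv_self] at h
    rw [map_inv, map_inv, h]
    group

/-- Braids on `n + 2` strands whose last strand returns to the last place, in combed form: a loop of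
the last strand in the complement of the others, followed by a braid on `n + 1` strands. -/
abbrev CombedBraidGroup (n : ℕ) : Type :=
  FreeGroup (Fin (n + 1)) ⋊[artinAction n] BraidGroup (n + 1)

/-- The braid on `n + 2` strands with a given combed form. -/
def uncomb (n : ℕ) : CombedBraidGroup n →* BraidGroup (n + 2) :=
  SemidirectProduct.lift (loopHom n) (addStrand n) fun b => by
    ext x
    exact loopHom_artinAction b _

lemma uncomb_apply (e : CombedBraidGroup n) :
    uncomb n e = loopHom n e.left * addStrand n e.right := rfl

lemma strandPerm_strandLoop (i : Fin (n + 1)) : strandPerm (n + 1) (strandLoop n i) = 1 := by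
  rw [strandLoop, map_mul, map_mul, map_inv, map_pow, strandPerm_sigma, sq, Equiv.swap_mul_self,
    mul_one, inv_mul_cancel]

lemma strandPerm_uncomb (e : CombedBraidGroup n) :
    strandPerm (n + 1) (uncomb n e) = strandPerm (n + 1) (addStrand n e.right) := by
  have hloop : (strandPerm (n + 1)).comp (loopHom n) = 1 :=
    FreeGroup.ext_hom _ _ fun i => by
      rw [MonoidHom.comp_apply, loopHom_of, strandPerm_strandLoop, MonoidHom.one_apply]
  have hleft : strandPerm (n + 1) (loopHom n e.left) = 1 := DFunLike.congr_fun hloop e.left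
  rw [uncomb_apply, map_mul, hleft, one_mul]

lemma right_mem_pureBraidGroup_of_uncomb_mem {e : CombedBraidGroup n}
    (he : uncomb n e ∈ pureBraidGroup (n + 1)) : e.right ∈ pureBraidGroup n := by
  rw [mem_pureBraidGroup, strandPerm_uncomb] at he
  refine mem_pureBraidGroup.mpr (Equiv.ext fun k => Fin.castSucc_injective _ ?_)
  rw [← strandPerm_addStrand_castSucc, he, Equiv.Perm.one_apply, Equiv.Perm.one_apply]

end LastStrand

section Combing

open FreeGroup (of)
open SemidirectProduct (inl inr)

variable {n : ℕ}

lemma semiconjBy_inr_inl {N G : Type*} [Group N] [Group G] {φ : G →* MulAut N} (g : G) (x : N) :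
    SemiconjBy (inr g : N ⋊[φ] G) (inl x) (inl (φ g x)) := by
  rw [SemiconjBy, SemidirectProduct.inl_aut, map_inv, inv_mul_cancel_right]

lemma semiconjBy_inr_sigma_inl_of {i j : Fin (n + 1)} (hij : i.val + 1 = j.val) :
    SemiconjBy (inr (sigma n i) : CombedBraidGroup n) (inl (of j)) (inl (of i)) := by
  obtain ⟨l, rfl⟩ : ∃ l : Fin n, i = l.castSucc := ⟨⟨i, by omega⟩, rfl⟩
  obtain rfl : j = l.succ := Fin.ext hij.symm
  have h := semiconjBy_inr_inl (φ := artinAction n) (sigma n l) (of l.succ)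
  rwa [artinAction_sigma, artinAut_of_right] at h

lemma commute_inr_sigma_inl_of_mul_of {i j : Fin (n + 1)} (hij : i.val + 1 = j.val) :
    Commute (inr (sigma n i) : CombedBraidGroup n) (inl (of j * of i)) := by
  obtain ⟨l, rfl⟩ : ∃ l : Fin n, i = l.castSucc := ⟨⟨i, by omega⟩, rfl⟩
  obtain rfl : j = l.succ := Fin.ext hij.symm
  have h := semiconjBy_inr_inl (φ := artinAction n) (sigma n l) (of l.succ * of l.castSucc)
  rwa [artinAction_sigma, map_mul (artinAut _), artinAut_of_right, artinAut_of_left, mul_assoc,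
    mul_inv_cancel_left] at h

lemma commute_inr_sigma_inl_of {i : ℕ} {j : Fin (n + 1)} (hij : i ≠ j) (hij' : i + 1 ≠ j) :
    Commute (inr (sigma n i) : CombedBraidGroup n) (inl (of j)) := by
  by_cases hi : i < n
  · have h := semiconjBy_inr_inl (φ := artinAction n) (sigma n (⟨i, hi⟩ : Fin n)) (of j)
    rwa [artinAction_sigma, artinAut_of_ne] at h
    · exact fun h => hij (by rw [h]; rfl)
    · exact fun h => hij' (by rw [h]; rfl)
  · rw [sigma, dif_neg hi, map_one]
    exact Commute.one_left _

/-- The combed braid `e` with `σ_i r_{τ k} = r_k e`, where `r = cosetRep n` and `τ` is the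
transposition of `i` and `i + 1` (see `sigma_mul_cosetRep_swap`). -/
def schreierFactor (i : Fin (n + 1)) (k : Fin (n + 2)) : CombedBraidGroup n :=
  if k < i.castSucc then inr (sigma n (i - 1))
  else if k = i.castSucc then 1
  else if k = i.succ then inl (of i)
  else inr (sigma n i)

variable {i j : Fin (n + 1)} {k : Fin (n + 2)}

lemma schreierFactor_of_lt (h : k < i.castSucc) :
    schreierFactor i k = inr (sigma n (i - 1)) := if_pos h

lemma schreierFactor_castSucc (i : Fin (n + 1)) : schreierFactor i i.castSucc = 1 := by
  simp [schreierFactor]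

lemma schreierFactor_succ (i : Fin (n + 1)) : schreierFactor i i.succ = inl (of i) := by
  simp [schreierFactor, Fin.ext_iff, Fin.lt_def]

lemma schreierFactor_of_gt (h : i.succ < k) : schreierFactor i k = inr (sigma n i) := by
  rw [schreierFactor, if_neg (Fin.castSucc_lt_succ.trans h).not_gt,
    if_neg (Fin.castSucc_lt_succ.trans h).ne', if_neg h.ne']

lemma swap_castSucc_succ_of_lt (h : k < i.castSucc) : Equiv.swap i.castSucc i.succ k = k :=
  Equiv.swap_apply_of_ne_of_ne h.ne (h.trans Fin.castSucc_lt_succ).ne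

lemma swap_castSucc_succ_of_gt (h : i.succ < k) : Equiv.swap i.castSucc i.succ k = k :=
  Equiv.swap_apply_of_ne_of_ne (Fin.castSucc_lt_succ.trans h).ne' h.ne'

/-- The wreath product of the combed braids with the permutations of `n + 2` strands, in which the
action of the braid group on cosets takes its values. -/
abbrev StrandWreath (n : ℕ) : Type :=
  (Fin (n + 2) → CombedBraidGroup n) ⋊[mulAutArrow] Equiv.Perm (Fin (n + 2))

lemma strandWreath_left_mul (f g : StrandWreath n) (k : Fin (n + 2)) :
    (f * g).left k = f.left k * g.left (f.right⁻¹ k) := rfl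

/-- The action of the Artin generator `σ_i` on the cosets, written as a monomial matrix. -/
def schreierGen (i : Fin (n + 1)) : StrandWreath n :=
  ⟨schreierFactor i, Equiv.swap i.castSucc i.succ⟩

lemma schreierFactor_mul_comm (hij : i.val + 2 ≤ j.val) (k : Fin (n + 2)) :
    schreierFactor i k * schreierFactor j (Equiv.swap i.castSucc i.succ k) =
      schreierFactor j k * schreierFactor i (Equiv.swap j.castSucc j.succ k) := by
  have hi : i.succ < j.castSucc := Fin.lt_def.mpr (by dsimp; omega)
  have hi' : i.castSucc < j.castSucc := Fin.castSucc_lt_succ.trans hi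
  have hj : i.succ < j.succ := hi.trans Fin.castSucc_lt_succ
  rcases lt_trichotomy k i.castSucc with hk | rfl | hk
  · rw [swap_castSucc_succ_of_lt hk, swap_castSucc_succ_of_lt (hk.trans hi'),
      schreierFactor_of_lt hk, schreierFactor_of_lt (hk.trans hi'), ← map_mul, ← map_mul,
      commute_sigma (by simp only [Fin.lt_def, Fin.val_castSucc] at hk; omega)]
  · rw [Equiv.swap_apply_left, swap_castSucc_succ_of_lt hi', schreierFactor_castSucc,
      schreierFactor_of_lt hi, schreierFactor_of_lt hi', one_mul, mul_one]
  rcases eq_or_lt_of_le (Fin.castSucc_lt_iff_succ_le.mp hk) with rfl | hik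
  · rw [Equiv.swap_apply_right, swap_castSucc_succ_of_lt hi, schreierFactor_succ,
      schreierFactor_of_lt hi', schreierFactor_of_lt hi,
      (commute_inr_sigma_inl_of (by omega) (by omega)).eq]
  rw [swap_castSucc_succ_of_gt hik, schreierFactor_of_gt hik]
  rcases lt_trichotomy k j.castSucc with hk | rfl | hk
  · rw [swap_castSucc_succ_of_lt hk, schreierFactor_of_lt hk, schreierFactor_of_gt hik,
      ← map_mul, ← map_mul,
      commute_sigma (by simp only [Fin.lt_def, Fin.val_castSucc, Fin.val_succ] at hk hik; omega)]
  · rw [Equiv.swap_apply_left, schreierFactor_castSucc, schreierFactor_of_gt hj, one_mul, mul_one]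
  rcases eq_or_lt_of_le (Fin.castSucc_lt_iff_succ_le.mp hk) with rfl | hjk
  · rw [Equiv.swap_apply_right, schreierFactor_of_gt hi, schreierFactor_succ,
      (commute_inr_sigma_inl_of (by omega) (by omega)).eq]
  · rw [swap_castSucc_succ_of_gt hjk, schreierFactor_of_gt hjk, schreierFactor_of_gt hik,
      ← map_mul, ← map_mul, commute_sigma hij]

lemma schreierFactor_braid (hij : i.val + 1 = j.val) (k : Fin (n + 2)) :
    schreierFactor i k * (schreierFactor j (Equiv.swap i.castSucc i.succ k) *
        schreierFactor i (Equiv.swap j.castSucc j.succ (Equiv.swap i.castSucc i.succ k))) =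
      schreierFactor j k * (schreierFactor i (Equiv.swap j.castSucc j.succ k) *
        schreierFactor j (Equiv.swap i.castSucc i.succ (Equiv.swap j.castSucc j.succ k))) := by
  have hadj : j.castSucc = i.succ := Fin.ext hij.symm
  have hi : i.castSucc < j.castSucc := by rw [hadj]; exact Fin.castSucc_lt_succ
  have hj : i.succ < j.succ := by rw [← hadj]; exact Fin.castSucc_lt_succ
  have hpred : j.val - 1 = i := by omega
  rcases lt_trichotomy k i.castSucc with hk | rfl | hk
  · have hbraid : sigma n (i - 1) * sigma n (j - 1) * sigma n (i - 1) =
        sigma n (j - 1) * sigma n (i - 1) * sigma n (j - 1) := by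
      simp only [Fin.lt_def, Fin.val_castSucc] at hk
      rw [show j.val - 1 = i - 1 + 1 by omega]
      exact sigma_mul_sigma_mul_sigma (by omega)
    simp only [swap_castSucc_succ_of_lt hk, swap_castSucc_succ_of_lt (hk.trans hi),
      schreierFactor_of_lt hk, schreierFactor_of_lt (hk.trans hi), ← map_mul, ← mul_assoc, hbraid]
  · rw [swap_castSucc_succ_of_lt hi, Equiv.swap_apply_left, ← hadj, Equiv.swap_apply_left,
      schreierFactor_castSucc, schreierFactor_castSucc, schreierFactor_of_gt hj,
      schreierFactor_of_lt hi, hpred, one_mul, one_mul, one_mul, mul_one]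
  rcases eq_or_lt_of_le (Fin.castSucc_lt_iff_succ_le.mp hk) with rfl | hik
  · rw [Equiv.swap_apply_right, swap_castSucc_succ_of_lt hi, ← hadj, Equiv.swap_apply_left,
      hadj, swap_castSucc_succ_of_gt hj, ← hadj, schreierFactor_castSucc, schreierFactor_castSucc,
      schreierFactor_of_lt hi, hadj, schreierFactor_succ, schreierFactor_succ,
      schreierFactor_of_gt hj, hpred, one_mul, mul_one,
      (semiconjBy_inr_sigma_inl_of hij).eq]
  have hjk : j.succ ≤ k := Fin.castSucc_lt_iff_succ_le.mp (hadj ▸ hik)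
  rcases eq_or_lt_of_le hjk with rfl | hjk
  · rw [swap_castSucc_succ_of_gt hj, Equiv.swap_apply_right, hadj, Equiv.swap_apply_right,
      schreierFactor_of_gt hj, schreierFactor_succ, schreierFactor_succ, schreierFactor_of_lt hi,
      hpred, ← map_mul, ← mul_assoc, ← map_mul,
      (commute_inr_sigma_inl_of_mul_of hij).eq]
  · have hbraid : sigma n i * sigma n j * sigma n i = sigma n j * sigma n i * sigma n j := by
      simp only [Fin.lt_def, Fin.val_succ] at hjk
      rw [← hij]
      exact sigma_mul_sigma_mul_sigma (by omega)
    simp only [swap_castSucc_succ_of_gt hik, swap_castSucc_succ_of_gt hjk,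
      schreierFactor_of_gt hik, schreierFactor_of_gt hjk, ← map_mul, ← mul_assoc, hbraid]

lemma isBraidFamily_schreierGen : IsBraidFamily (schreierGen (n := n)) where
  commute i j hij := SemidirectProduct.ext (funext fun k => schreierFactor_mul_comm hij k)
    (isBraidFamily_swap.commute i j hij)
  braid i j hij := by
    refine SemidirectProduct.ext (funext fun k => ?_) (isBraidFamily_swap.braid i j hij)
    rw [mul_assoc, mul_assoc]
    exact schreierFactor_braid hij k

/-- The action of the braid group on the cosets of the braids whose last strand returns to the last
place, written by monomial matrices with entries in `CombedBraidGroup n`. -/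
def schreierHom (n : ℕ) : BraidGroup (n + 2) →* StrandWreath n := isBraidFamily_schreierGen.lift

lemma schreierHom_sigma (i : Fin (n + 1)) : schreierHom n (sigma (n + 1) i) = schreierGen i :=
  isBraidFamily_schreierGen.lift_sigma i

lemma schreierHom_right (b : BraidGroup (n + 2)) :
    (schreierHom n b).right = strandPerm (n + 1) b := by
  induction b using braid_induction with
  | one => rw [map_one, map_one]; rfl
  | sigma i => rw [schreierHom_sigma, strandPerm_sigma]; rfl
  | mul a b ha hb => rw [map_mul, map_mul, SemidirectProduct.mul_right, ha, hb]
  | inv a ha => rw [map_inv, map_inv, SemidirectProduct.inv_right, ha]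

lemma uncomb_inr_sigma {l : ℕ} (hl : l < n) :
    uncomb n (inr (sigma n l)) = sigma (n + 1) l := by
  rw [uncomb, SemidirectProduct.lift_inr]
  exact addStrand_sigma ⟨l, hl⟩

lemma sigma_mul_cosetRep_swap (i : Fin (n + 1)) (k : Fin (n + 2)) :
    sigma (n + 1) i * cosetRep n (Equiv.swap i.castSucc i.succ k) =
      cosetRep n k * uncomb n (schreierFactor i k) := by
  rcases lt_trichotomy k i.castSucc with hk | rfl | hk
  · have hki : k.val < i := hk
    rw [swap_castSucc_succ_of_lt hk, schreierFactor_of_lt hk, uncomb_inr_sigma (by omega),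
      cosetRep_mul_sigma (by omega) (by omega), show i.val - 1 + 1 = i by omega]
  · rw [Equiv.swap_apply_left, schreierFactor_castSucc, map_one, mul_one]
    exact sigma_mul_cosetRep (by omega)
  rcases eq_or_lt_of_le (Fin.castSucc_lt_iff_succ_le.mp hk) with rfl | hik
  · rw [Equiv.swap_apply_right, schreierFactor_succ, uncomb, SemidirectProduct.lift_inl, loopHom_of,
      strandLoop, Fin.val_castSucc, Fin.val_succ, ← sigma_mul_cosetRep (by omega)]
    simp only [sq, mul_assoc, mul_inv_cancel_left]
  · have hki : i.val + 1 < k := hik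
    rw [swap_castSucc_succ_of_gt hik, schreierFactor_of_gt hik, uncomb_inr_sigma (by omega),
      (commute_sigma_cosetRep (by omega)).eq]

lemma mul_cosetRep (b : BraidGroup (n + 2)) (k : Fin (n + 2)) :
    b * cosetRep n ((strandPerm (n + 1) b)⁻¹ k) =
      cosetRep n k * uncomb n ((schreierHom n b).left k) := by
  induction b using braid_induction generalizing k with
  | one => simp
  | sigma i =>
    rw [strandPerm_sigma, Equiv.swap_inv, schreierHom_sigma]
    exact sigma_mul_cosetRep_swap i k
  | mul a b ha hb =>
    rw [map_mul, map_mul, strandWreath_left_mul, map_mul, schreierHom_right, ← mul_assoc, ← ha,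
      mul_assoc, mul_assoc, ← hb, mul_inv_rev, Equiv.Perm.mul_apply]
  | inv a ha =>
    have h := ha (strandPerm (n + 1) a k)
    rw [← Equiv.Perm.mul_apply, inv_mul_cancel, Equiv.Perm.one_apply] at h
    have hleft : ((schreierHom n a)⁻¹).left k =
        ((schreierHom n a).left (strandPerm (n + 1) a k))⁻¹ := by
      rw [← schreierHom_right]
      rfl
    rw [map_inv, inv_inv, map_inv, hleft, map_inv, inv_mul_eq_iff_eq_mul, ← mul_assoc, h,
      mul_inv_cancel_right]

/-- Combing: the last diagonal entry of the monomial matrix of a pure braid. -/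
def comb (n : ℕ) : pureBraidGroup (n + 1) →* CombedBraidGroup n where
  toFun b := (schreierHom n b).left (Fin.last (n + 1))
  map_one' := by simp
  map_mul' a b := by
    have ha : strandPerm (n + 1) a = 1 := mem_pureBraidGroup.mp a.2
    rw [Subgroup.coe_mul, map_mul, strandWreath_left_mul, schreierHom_right, ha, inv_one,
      Equiv.Perm.one_apply]

lemma uncomb_comb (b : pureBraidGroup (n + 1)) : uncomb n (comb n b) = b := by
  have hb : strandPerm (n + 1) b = 1 := mem_pureBraidGroup.mp b.2
  have h := mul_cosetRep (b : BraidGroup (n + 2)) (Fin.last (n + 1))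
  rw [hb, inv_one, Equiv.Perm.one_apply, Fin.val_last, cosetRep_last, mul_one, one_mul] at h
  exact h.symm

lemma comb_right_mem (b : pureBraidGroup (n + 1)) : (comb n b).right ∈ pureBraidGroup n :=
  right_mem_pureBraidGroup_of_uncomb_mem (by rw [uncomb_comb]; exact b.2)

end Combing

section UniqueRoots

variable {n : ℕ}

lemma pow_left_injective_pureBraidGroup_succ [IsMulTorsionFree (pureBraidGroup n)] {k : ℕ}
    (hk : k ≠ 0) : Function.Injective fun p : pureBraidGroup (n + 1) => p ^ k := by
  intro p q h
  have hpow : comb n p ^ k = comb n q ^ k := by rw [← map_pow, ← map_pow]; exact congrArg _ h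
  have hleft : (comb n p).left = (comb n q).left :=
    left_eq_of_pow_eq (augmentationSeparated_freeGroup _)
      (abelianization_of_artinAction_of_pure (comb_right_mem p))
      (abelianization_of_artinAction_of_pure (comb_right_mem q)) hk hpow
  have hright : (comb n p).right = (comb n q).right := by
    have hpow_right := congrArg SemidirectProduct.rightHom hpow
    rw [map_pow, map_pow] at hpow_right
    exact congrArg Subtype.val (pow_left_injective hk
      (Subtype.ext hpow_right : (⟨_, comb_right_mem p⟩ : pureBraidGroup n) ^ k =
        ⟨_, comb_right_mem q⟩ ^ k))
  rw [← Subtype.coe_inj, ← uncomb_comb p, ← uncomb_comb q, SemidirectProduct.ext hleft hright]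

instance isMulTorsionFree_pureBraidGroup (n : ℕ) : IsMulTorsionFree (pureBraidGroup n) := by
  induction n with
  | zero =>
    have : Subsingleton (BraidGroup 1) :=
      subsingleton_of_forall_eq 1 fun b => by
        induction b using braid_induction with
        | one => rfl
        | sigma i => exact i.elim0
        | mul a b ha hb => rw [ha, hb, one_mul]
        | inv a ha => rw [ha, inv_one]
    exact ⟨fun k _ => Function.injective_of_subsingleton _⟩
  | succ n ih => exact ⟨fun k hk => pow_left_injective_pureBraidGroup_succ hk⟩

end UniqueRoots

section HurwitzPairs

variable {G : Type*} [Group G]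

lemma commute_of_commute_pow {N : Subgroup G} [N.Normal] [IsMulTorsionFree N] {a x : G} {k : ℕ}
    (hx : x ∈ N) (hk : k ≠ 0) (h : Commute a (x ^ k)) : Commute a x := by
  let y : N := ⟨x, hx⟩
  have hpow : MulAut.conjNormal a y ^ k = y ^ k := by
    rw [← map_pow]
    exact Subtype.ext (by simp [y, h.eq])
  have hconj : a * x * a⁻¹ = x := congrArg Subtype.val (pow_left_injective hk hpow)
  exact mul_inv_eq_iff_eq_mul.mp hconj

/-- The elementary Hurwitz move `(a, b) ↦ (b, b⁻¹ab)` on pairs. -/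
abbrev hurwitzMove (G : Type*) [Group G] : Equiv.Perm (Fin 2 → G) := hEquiv (0 : Fin 1)

lemma hurwitzOrbit_eq_orbit_zpowers (s : Fin 2 → G) :
    hurwitzOrbit s = MulAction.orbit (Subgroup.zpowers (hurwitzMove G)) s := by
  ext t
  constructor
  · rintro ⟨w, rfl⟩
    let f (i : Fin 1) : (Equiv.Perm (Fin 2 → G))ᵐᵒᵖ := .op (hEquiv i)
    have hrange : Set.range f = {.op (hurwitzMove G)} := Set.range_unique
    have hmem : FreeGroup.lift f w ∈ Subgroup.zpowers (.op (hurwitzMove G)) := by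
      rw [Subgroup.zpowers_eq_closure, ← hrange, ← FreeGroup.range_lift_eq_closure]
      exact ⟨w, rfl⟩
    obtain ⟨k, hk⟩ := hmem
    exact ⟨⟨_, k, rfl⟩, by rw [hurwitzAct, ← hk]; rfl⟩
  · rintro ⟨⟨_, k, rfl⟩, rfl⟩
    exact ⟨FreeGroup.of 0 ^ k, by simp [hurwitzAct, Subgroup.smul_def]⟩

lemma ncard_hurwitzOrbit (s : Fin 2 → G) :
    (hurwitzOrbit s).ncard = MulAction.period (hurwitzMove G) s := by
  rw [hurwitzOrbit_eq_orbit_zpowers, ← Nat.card_coe_set_eq,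
    Nat.card_congr (MulAction.orbitZPowersEquiv (hurwitzMove G) s), Nat.card_zmod]
  rfl

lemma hurwitzMove_sq_apply (s : Fin 2 → G) :
    (hurwitzMove G ^ 2) s = fun i => (s 0 * s 1)⁻¹ * s i * (s 0 * s 1) := by
  rw [sq, Equiv.Perm.mul_apply]
  funext i
  fin_cases i <;> simp [hEquiv, mul_assoc]

lemma hurwitzMove_pow_two_mul_apply (s : Fin 2 → G) (k : ℕ) :
    (hurwitzMove G ^ (2 * k)) s = fun i => ((s 0 * s 1) ^ k)⁻¹ * s i * (s 0 * s 1) ^ k := by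
  induction k generalizing s with
  | zero => simp
  | succ k ih =>
    rw [mul_add, mul_one, pow_add, Equiv.Perm.mul_apply, ih, hurwitzMove_sq_apply]
    simp only [pow_succ', mul_inv_rev, mul_assoc, mul_inv_cancel_left, inv_mul_cancel_left]

lemma period_hurwitzMove_dvd_two_mul_iff (s : Fin 2 → G) (k : ℕ) :
    MulAction.period (hurwitzMove G) s ∣ 2 * k ↔ Commute (s 0) ((s 0 * s 1) ^ k) := by
  have hprod : Commute (s 0 * s 1) ((s 0 * s 1) ^ k) := Commute.self_pow _ k
  rw [← MulAction.pow_smul_eq_iff_period_dvd, Equiv.Perm.smul_def, hurwitzMove_pow_two_mul_apply,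
    funext_iff, Fin.forall_fin_two]
  simp only [mul_assoc, inv_mul_eq_iff_eq_mul]
  refine ⟨fun h => h.1, fun h => ⟨h.eq, ?_⟩⟩
  have hsnd := h.inv_left.mul_left hprod
  rw [inv_mul_cancel_left] at hsnd
  exact hsnd.eq

theorem ncard_hurwitzOrbit_dvd_two_mul {N : Subgroup G} [N.Normal] [IsMulTorsionFree N]
    {s : Fin 2 → G} (h : (hurwitzOrbit s).Finite) {m : ℕ} (hm : (s 0 * s 1) ^ m ∈ N) :
    (hurwitzOrbit s).ncard ∣ 2 * m := by
  have hpos : (hurwitzOrbit s).ncard ≠ 0 := by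
    rw [ne_eq, Set.ncard_eq_zero h]
    exact Set.Nonempty.ne_empty ⟨s, 1, by simp [hurwitzAct]⟩
  rw [ncard_hurwitzOrbit] at hpos ⊢
  have hcomm := (period_hurwitzMove_dvd_two_mul_iff s _).mp (dvd_mul_left _ 2)
  rw [period_hurwitzMove_dvd_two_mul_iff]
  refine commute_of_commute_pow hm hpos ?_
  rw [pow_right_comm]
  exact hcomm.pow_right m

theorem hurwitzOrbit_card_le_eight_general {n : ℕ} (s : Fin 2 → BraidGroup (n + 1))
    (h : (hurwitzOrbit s).Finite) :
    (hurwitzOrbit s).ncard ∣ 2 * orderOf (strandPerm n (s 0 * s 1)) :=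
  ncard_hurwitzOrbit_dvd_two_mul (N := pureBraidGroup n) h
    (by rw [mem_pureBraidGroup, map_pow, pow_orderOf_eq_one])

set_option maxRecDepth 20000 in
lemma orderOf_perm_fin_four_le (g : Equiv.Perm (Fin 4)) : orderOf g ≤ 4 := by
  have hpow : ∀ g : Equiv.Perm (Fin 4), g ^ 3 = 1 ∨ g ^ 4 = 1 := by decide
  rcases hpow g with h | h
  · exact (orderOf_le_of_pow_eq_one (by norm_num) h).trans (by norm_num)
  · exact orderOf_le_of_pow_eq_one (by norm_num) h

end HurwitzPairs

/-- A degree `4`, length `2` braid system with finite Hurwitz orbit has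
orbit of size at most `8`. -/
theorem hurwitzOrbit_card_le_eight (s : Fin 2 → BraidGroup 4)
    (h : (hurwitzOrbit s).Finite) :
    (hurwitzOrbit s).ncard ≤ 8 := by
  have horder : orderOf (strandPerm 3 (s 0 * s 1)) ≤ 4 := orderOf_perm_fin_four_le _
  have hpos : 0 < orderOf (strandPerm 3 (s 0 * s 1)) := orderOf_pos _
  have hle := Nat.le_of_dvd (by omega) (hurwitzOrbit_card_le_eight_general s h)
  omega
end

section
/- Let s = (β_1,…,β_n) ∈ B_m^n be a reducible braid system, with non-trivial partition I ⊔ J of {1,2,…,n} such that β_iβ_j = β_jβ_i for all i ∈ I, j ∈ J, where #I = l. Let s' = (β_{i_1},…,β_{i_l}) ∈ B_m^l with i_1 < ⋯ < i_l the elements of I, and s'' = (β_{j_1},…,β_{j_{n-l}}) ∈ B_m^{n-l} with j_1 < ⋯ < j_{n-l} the elements of J. If the Hurwitz orbit s·B_n is finite, then the Hurwitz orbits s'·B_l and s''·B_{n-l} are also finite, and #(s·B_n) ≤ binom(n, l) · #(s'·B_l) · #(s''·B_{n-l}). -/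
/-!
Every system in the orbit of `s` is a shuffle of a system in the orbit of `s'` with one in the orbit
of `s''`: a move within a block moves that block alone, while a move across the two blocks, whose
entries commute, just transposes two neighbours. A shuffle is determined by its two parts and by the
positions of the first one, which gives the bound. Conversely, by transposing neighbours of
different blocks one can bring any two successive entries of `s'` next to each other, so every move
of `s'` is induced by moves of `s`; hence each system in the orbit of `s'` is a subsystem of one in
the orbit of `s`.
-/

section Positions

variable {n l : ℕ}

/-- The smaller of the two adjacent positions of an `n`-tuple on which the `p`-th Hurwitz move
acts. -/
def lowerPos (p : Fin (n - 1)) : Fin n := ⟨p, by omega⟩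

/-- The larger of the two adjacent positions of an `n`-tuple on which the `p`-th Hurwitz move
acts. -/
def upperPos (p : Fin (n - 1)) : Fin n := ⟨p + 1, by omega⟩

@[simp] theorem val_lowerPos (p : Fin (n - 1)) : (lowerPos p : ℕ) = p := rfl

@[simp] theorem val_upperPos (p : Fin (n - 1)) : (upperPos p : ℕ) = p + 1 := rfl

theorem lowerPos_covBy_upperPos (p : Fin (n - 1)) : lowerPos p ⋖ upperPos p := by simp

theorem exists_eq_lowerPos_upperPos_of_covBy {i j : Fin n} (h : i ⋖ j) :
    ∃ p, i = lowerPos p ∧ j = upperPos p := by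
  have hij : (i : ℕ) + 1 = j := by simpa using h
  exact ⟨⟨i, by omega⟩, rfl, Fin.ext hij.symm⟩

theorem exists_adjacent_of_mem_range {ι : Fin l → Fin n} (hι : StrictMono ι) {p : Fin (n - 1)}
    (hlow : lowerPos p ∈ Set.range ι) (hupp : upperPos p ∈ Set.range ι) :
    ∃ q, ι (lowerPos q) = lowerPos p ∧ ι (upperPos q) = upperPos p := by
  obtain ⟨⟨a, ha⟩, b, hb⟩ := And.intro hlow hupp
  have hab : a ⋖ b := CovBy.of_image (OrderEmbedding.ofStrictMono ι hι) <| by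
    simpa only [OrderEmbedding.coe_ofStrictMono, ha, hb] using lowerPos_covBy_upperPos p
  obtain ⟨q, rfl, rfl⟩ := exists_eq_lowerPos_upperPos_of_covBy hab
  exact ⟨q, ha, hb⟩

theorem exists_eq_upperPos_of_not_covBy {i j : Fin n} (hij : i < j) (hncov : ¬ i ⋖ j) :
    ∃ p, j = upperPos p ∧ i < lowerPos p := by
  have hne : (i : ℕ) + 1 ≠ j := by simpa using hncov
  have hupp : (j : ℕ) = j - 1 + 1 := by omega
  have hlow : (i : ℕ) < j - 1 := by omega
  exact ⟨⟨j - 1, by omega⟩, Fin.ext hupp, hlow⟩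

/-- The transposition of the two adjacent positions on which the `p`-th Hurwitz move acts. -/
def adjacentSwap (p : Fin (n - 1)) : Equiv.Perm (Fin n) := Equiv.swap (lowerPos p) (upperPos p)

@[simp] theorem adjacentSwap_lowerPos (p : Fin (n - 1)) :
    adjacentSwap p (lowerPos p) = upperPos p :=
  Equiv.swap_apply_left _ _

@[simp] theorem adjacentSwap_upperPos (p : Fin (n - 1)) :
    adjacentSwap p (upperPos p) = lowerPos p :=
  Equiv.swap_apply_right _ _

@[simp] theorem adjacentSwap_adjacentSwap (p : Fin (n - 1)) (i : Fin n) :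
    adjacentSwap p (adjacentSwap p i) = i :=
  DFunLike.congr_fun (Equiv.swap_swap _ _) i

theorem comp_adjacentSwap_comp {α : Type*} (t : Fin n → α) (p : Fin (n - 1)) (ι : Fin l → Fin n) :
    (t ∘ adjacentSwap p) ∘ (adjacentSwap p ∘ ι) = t ∘ ι := by
  ext a
  simp

theorem adjacentSwap_of_ne {p : Fin (n - 1)} {i : Fin n} (hlow : i ≠ lowerPos p)
    (hupp : i ≠ upperPos p) : adjacentSwap p i = i :=
  Equiv.swap_apply_of_ne_of_ne hlow hupp

theorem strictMonoOn_adjacentSwap_compl_lowerPos (p : Fin (n - 1)) :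
    StrictMonoOn (adjacentSwap p) {lowerPos p}ᶜ := by
  intro i hi j hj hij
  simp only [adjacentSwap, Equiv.swap_apply_def, Set.mem_compl_iff, Set.mem_singleton_iff,
    Fin.ext_iff, Fin.lt_def, apply_ite Fin.val, val_lowerPos, val_upperPos] at *
  split_ifs <;> omega

theorem strictMonoOn_adjacentSwap_compl_upperPos (p : Fin (n - 1)) :
    StrictMonoOn (adjacentSwap p) {upperPos p}ᶜ := by
  intro i hi j hj hij
  simp only [adjacentSwap, Equiv.swap_apply_def, Set.mem_compl_iff, Set.mem_singleton_iff,
    Fin.ext_iff, Fin.lt_def, apply_ite Fin.val, val_lowerPos, val_upperPos] at *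
  split_ifs <;> omega

end Positions

section Moves

variable {G H : Type*} [Group G] [Group H] {n l k : ℕ} {p : Fin (n - 1)} {t u : Fin n → G}

@[simp] theorem hEquiv_lowerPos (p : Fin (n - 1)) (t : Fin n → G) :
    hEquiv p t (lowerPos p) = t (upperPos p) := by
  simp [hEquiv, upperPos]

@[simp] theorem hEquiv_upperPos (p : Fin (n - 1)) (t : Fin n → G) :
    hEquiv p t (upperPos p) = (t (upperPos p))⁻¹ * t (lowerPos p) * t (upperPos p) := by
  simp [hEquiv, lowerPos, upperPos]

theorem hEquiv_of_ne {i : Fin n} (hlow : i ≠ lowerPos p) (hupp : i ≠ upperPos p) (t : Fin n → G) :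
    hEquiv p t i = t i := by
  rw [ne_eq, Fin.ext_iff] at hlow hupp
  exact (if_neg hlow).trans (if_neg hupp)

theorem hEquiv_monoidHom_comp (f : G →* H) (p : Fin (n - 1)) (t : Fin n → G) :
    hEquiv p (f ∘ t) = f ∘ hEquiv p t := by
  ext i
  by_cases hlow : i = lowerPos p
  · simp [hlow]
  by_cases hupp : i = upperPos p
  · simp [hupp]
  simp [hEquiv_of_ne hlow hupp]

theorem hEquiv_eq_comp_adjacentSwap (hcomm : Commute (t (lowerPos p)) (t (upperPos p))) :
    hEquiv p t = t ∘ adjacentSwap p := by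
  ext i
  by_cases hlow : i = lowerPos p
  · simp [hlow]
  by_cases hupp : i = upperPos p
  · simp [hupp, mul_assoc, hcomm.eq]
  simp [hEquiv_of_ne hlow hupp, adjacentSwap_of_ne hlow hupp]

theorem hEquiv_comp_of_adjacent {ι : Fin l → Fin n} (hι : ι.Injective) {q : Fin (l - 1)}
    (hlow : ι (lowerPos q) = lowerPos p) (hupp : ι (upperPos q) = upperPos p) (t : Fin n → G) :
    hEquiv p t ∘ ι = hEquiv q (t ∘ ι) := by
  ext a
  by_cases halow : a = lowerPos q
  · simp [halow, hlow, hupp]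
  by_cases haupp : a = upperPos q
  · simp [haupp, hlow, hupp]
  have hιlow : ι a ≠ lowerPos p := hlow ▸ hι.ne halow
  have hιupp : ι a ≠ upperPos p := hupp ▸ hι.ne haupp
  simp [hEquiv_of_ne halow haupp, hEquiv_of_ne hιlow hιupp]

theorem hEquiv_comp_of_notMem_range {κ : Fin k → Fin n} (hlow : lowerPos p ∉ Set.range κ)
    (hupp : upperPos p ∉ Set.range κ) (t : Fin n → G) : hEquiv p t ∘ κ = t ∘ κ :=
  funext fun b => hEquiv_of_ne (fun h => hlow ⟨b, h⟩) (fun h => hupp ⟨b, h⟩) t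

/-- The tuples `t` and `u` differ by the `p`-th elementary Hurwitz move or its inverse. -/
def HurwitzMove (p : Fin (n - 1)) (t u : Fin n → G) : Prop := u = hEquiv p t ∨ t = hEquiv p u

namespace HurwitzMove

theorem eq_comp_adjacentSwap (hmove : HurwitzMove p t u)
    (hcomm : Commute (t (lowerPos p)) (t (upperPos p))) : u = t ∘ adjacentSwap p := by
  rcases hmove with rfl | hinv
  · exact hEquiv_eq_comp_adjacentSwap hcomm
  · have hswapped : hEquiv p (t ∘ adjacentSwap p) = t := by
      rw [hEquiv_eq_comp_adjacentSwap (by simpa using hcomm.symm)]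
      ext i
      simp
    exact (hEquiv p).injective (hinv.symm.trans hswapped.symm)

theorem comp_of_adjacent (hmove : HurwitzMove p t u) {ι : Fin l → Fin n} (hι : ι.Injective)
    {q : Fin (l - 1)} (hlow : ι (lowerPos q) = lowerPos p) (hupp : ι (upperPos q) = upperPos p) :
    HurwitzMove q (t ∘ ι) (u ∘ ι) := by
  rcases hmove with rfl | rfl
  · exact .inl (hEquiv_comp_of_adjacent hι hlow hupp t)
  · exact .inr (hEquiv_comp_of_adjacent hι hlow hupp u)

theorem comp_eq_of_notMem_range (hmove : HurwitzMove p t u) {κ : Fin k → Fin n}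
    (hlow : lowerPos p ∉ Set.range κ) (hupp : upperPos p ∉ Set.range κ) : u ∘ κ = t ∘ κ := by
  rcases hmove with rfl | rfl
  · exact hEquiv_comp_of_notMem_range hlow hupp t
  · exact (hEquiv_comp_of_notMem_range hlow hupp u).symm

theorem exists_lift_of_adjacent {ι : Fin l → Fin n} (hι : ι.Injective) {q : Fin (l - 1)}
    (hlow : ι (lowerPos q) = lowerPos p) (hupp : ι (upperPos q) = upperPos p)
    {v : Fin l → G} (hmove : HurwitzMove q (t ∘ ι) v) :
    ∃ u, HurwitzMove p t u ∧ u ∘ ι = v := by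
  rcases hmove with rfl | hinv
  · exact ⟨hEquiv p t, .inl rfl, hEquiv_comp_of_adjacent hι hlow hupp t⟩
  · refine ⟨(hEquiv p).symm t, .inr (by simp), (hEquiv q).injective ?_⟩
    rw [← hEquiv_comp_of_adjacent hι hlow hupp, Equiv.apply_symm_apply, hinv]

end HurwitzMove

end Moves

section Orbits

variable {G : Type*} [Group G] {n l k : ℕ} {p : Fin (n - 1)} {s t u : Fin n → G}

theorem mem_hurwitzOrbit_self (s : Fin n → G) : s ∈ hurwitzOrbit s := ⟨1, by simp [hurwitzAct]⟩

theorem HurwitzMove.mem_hurwitzOrbit (hmove : HurwitzMove p t u) (ht : t ∈ hurwitzOrbit s) :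
    u ∈ hurwitzOrbit s := by
  obtain ⟨w, rfl⟩ := ht
  rcases hmove with rfl | hinv
  · exact ⟨w * FreeGroup.of p, by simp [hurwitzAct]⟩
  · refine ⟨w * (FreeGroup.of p)⁻¹, (hEquiv p).injective ?_⟩
    rw [← hinv]
    simp [hurwitzAct]

@[elab_as_elim]
theorem hurwitzOrbit_induction {motive : ∀ t, t ∈ hurwitzOrbit s → Prop}
    (self : motive s (mem_hurwitzOrbit_self s))
    (move : ∀ p t u (hmove : HurwitzMove p t u) (ht : t ∈ hurwitzOrbit s),
      motive t ht → motive u (hmove.mem_hurwitzOrbit ht))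
    (ht : t ∈ hurwitzOrbit s) : motive t ht := by
  suffices ∃ ht', motive t ht' from this.2
  obtain ⟨w, rfl⟩ := ht
  have preserved (p t u) (hmove : HurwitzMove p t u) :
      (∃ ht, motive t ht) → ∃ hu, motive u hu :=
    fun ⟨ht, hmotive⟩ => ⟨hmove.mem_hurwitzOrbit ht, move p t u hmove ht hmotive⟩
  suffices ∀ t, (∃ ht, motive t ht) → ∃ hu, motive (hurwitzAct w t) hu from
    this s ⟨mem_hurwitzOrbit_self s, self⟩
  induction w using FreeGroup.induction_on with
  | C1 => intro t ht; simpa [hurwitzAct] using ht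
  | of p => exact fun t => preserved p t _ (.inl (by simp [hurwitzAct]))
  | inv_of p _ => exact fun t => preserved p t _ (.inr (by simp [hurwitzAct]))
  | mul w v hw hv => intro t ht; simpa [hurwitzAct] using hv _ (hw t ht)

theorem monoidHom_comp_eq_of_mem_hurwitzOrbit {f : G →* G} (hf : f ∘ s = s)
    (ht : t ∈ hurwitzOrbit s) : f ∘ t = t := by
  induction ht using hurwitzOrbit_induction with
  | self => exact hf
  | move p t u hmove _ hft =>
    rcases hmove with rfl | rfl
    · rw [← hEquiv_monoidHom_comp, hft]
    · exact (hEquiv p).injective (by rw [hEquiv_monoidHom_comp, hft])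

theorem commute_of_mem_hurwitzOrbit {g : G} (hg : ∀ i, Commute g (s i)) (ht : t ∈ hurwitzOrbit s)
    (i : Fin n) : Commute g (t i) := by
  have hfixed : (MulAut.conj g).toMonoidHom ∘ s = s :=
    funext fun i => mul_inv_eq_iff_eq_mul.mpr (hg i)
  exact mul_inv_eq_iff_eq_mul.mp (congrFun (monoidHom_comp_eq_of_mem_hurwitzOrbit hfixed ht) i)

theorem commute_of_mem_hurwitzOrbit_of_mem_hurwitzOrbit {s' t' : Fin l → G} {s'' t'' : Fin k → G}
    (hcomm : ∀ a b, Commute (s' a) (s'' b)) (ht' : t' ∈ hurwitzOrbit s')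
    (ht'' : t'' ∈ hurwitzOrbit s'') (a : Fin l) (b : Fin k) : Commute (t' a) (t'' b) :=
  commute_of_mem_hurwitzOrbit
    (fun b => (commute_of_mem_hurwitzOrbit (fun a => (hcomm a b).symm) ht' a).symm) ht'' b

end Orbits

/-- `(ι, κ)` is a shuffle: `ι` and `κ` enumerate in increasing order two complementary sets of
positions in an `n`-tuple. -/
structure IsShuffle {n l k : ℕ} (ι : Fin l → Fin n) (κ : Fin k → Fin n) : Prop where
  strictMono_left : StrictMono ι
  strictMono_right : StrictMono κ
  left_ne_right : ∀ a b, ι a ≠ κ b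
  mem_range_or_mem_range : ∀ i, i ∈ Set.range ι ∨ i ∈ Set.range κ

namespace IsShuffle

variable {n l k : ℕ} {ι : Fin l → Fin n} {κ : Fin k → Fin n} {p : Fin (n - 1)}

protected theorem symm (h : IsShuffle ι κ) : IsShuffle κ ι where
  strictMono_left := h.strictMono_right
  strictMono_right := h.strictMono_left
  left_ne_right a b := (h.left_ne_right b a).symm
  mem_range_or_mem_range i := (h.mem_range_or_mem_range i).symm

theorem range_right (h : IsShuffle ι κ) : Set.range κ = (Set.range ι)ᶜ := by
  ext i
  refine ⟨?_, (h.mem_range_or_mem_range i).resolve_left⟩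
  rintro ⟨b, rfl⟩ ⟨a, hab⟩
  exact h.left_ne_right a b hab

theorem notMem_range_right (h : IsShuffle ι κ) {i : Fin n} (hi : i ∈ Set.range ι) :
    i ∉ Set.range κ := by
  simpa [h.range_right] using hi

theorem right_unique {κ' : Fin k → Fin n} (h : IsShuffle ι κ) (h' : IsShuffle ι κ') : κ = κ' :=
  (StrictMono.range_inj h.strictMono_right h'.strictMono_right).mp
    (h.range_right.trans h'.range_right.symm)

theorem eq_of_comp_eq {α : Type*} (h : IsShuffle ι κ) {t u : Fin n → α}
    (hι : t ∘ ι = u ∘ ι) (hκ : t ∘ κ = u ∘ κ) : t = u := by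
  ext i
  rcases h.mem_range_or_mem_range i with ⟨a, rfl⟩ | ⟨b, rfl⟩
  · exact congrFun hι a
  · exact congrFun hκ b

theorem adjacentSwap_comp (h : IsShuffle ι κ) (hlow : lowerPos p ∈ Set.range ι)
    (hupp : upperPos p ∈ Set.range κ) : IsShuffle (adjacentSwap p ∘ ι) (adjacentSwap p ∘ κ) where
  strictMono_left a b hab :=
    strictMonoOn_adjacentSwap_compl_upperPos p
      (fun ha => h.symm.notMem_range_right hupp ⟨a, ha⟩)
      (fun hb => h.symm.notMem_range_right hupp ⟨b, hb⟩) (h.strictMono_left hab)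
  strictMono_right a b hab :=
    strictMonoOn_adjacentSwap_compl_lowerPos p
      (fun ha => h.notMem_range_right hlow ⟨a, ha⟩)
      (fun hb => h.notMem_range_right hlow ⟨b, hb⟩) (h.strictMono_right hab)
  left_ne_right a b hab := h.left_ne_right a b ((adjacentSwap p).injective hab)
  mem_range_or_mem_range i :=
    (h.mem_range_or_mem_range (adjacentSwap p i)).imp
      (fun ⟨a, ha⟩ => ⟨a, by simp [ha]⟩) (fun ⟨b, hb⟩ => ⟨b, by simp [hb]⟩)

theorem exists_lowerPos_mem_range_right_of_not_covBy (h : IsShuffle ι κ) {q : Fin (l - 1)}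
    (hncov : ¬ ι (lowerPos q) ⋖ ι (upperPos q)) :
    ∃ p, ι (upperPos q) = upperPos p ∧ ι (lowerPos q) < lowerPos p ∧ lowerPos p ∈ Set.range κ := by
  have hqcov := lowerPos_covBy_upperPos q
  obtain ⟨p, hupp, hlt⟩ := exists_eq_upperPos_of_not_covBy (h.strictMono_left hqcov.lt) hncov
  refine ⟨p, hupp, hlt, (h.mem_range_or_mem_range _).resolve_left ?_⟩
  rintro ⟨a, ha⟩
  have hlow_lt : lowerPos q < a := h.strictMono_left.lt_iff_lt.mp (ha ▸ hlt)
  have hlt_upp : a < upperPos q :=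
    h.strictMono_left.lt_iff_lt.mp (ha ▸ hupp ▸ (lowerPos_covBy_upperPos p).lt)
  exact hqcov.2 hlow_lt hlt_upp

end IsShuffle

section OrbitShuffles

variable {G : Type*} [Group G] {n l k : ℕ} {s' : Fin l → G} {s'' : Fin k → G}
  {p : Fin (n - 1)} {t u : Fin n → G}

/-- The `n`-tuples obtained by shuffling a tuple in the Hurwitz orbit of `s'` with one in the
Hurwitz orbit of `s''`; the set is empty unless `n = l + k`. -/
def orbitShuffles (n : ℕ) (s' : Fin l → G) (s'' : Fin k → G) : Set (Fin n → G) :=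
  {t | ∃ (ι : Fin l → Fin n) (κ : Fin k → Fin n),
    IsShuffle ι κ ∧ t ∘ ι ∈ hurwitzOrbit s' ∧ t ∘ κ ∈ hurwitzOrbit s''}

theorem orbitShuffles_comm (n : ℕ) (s' : Fin l → G) (s'' : Fin k → G) :
    orbitShuffles n s' s'' = orbitShuffles n s'' s' := by
  ext t
  constructor <;> exact fun ⟨ι, κ, h, hι, hκ⟩ => ⟨κ, ι, h.symm, hκ, hι⟩

theorem HurwitzMove.mem_orbitShuffles_of_lowerPos_mem_range (hmove : HurwitzMove p t u)
    (hcomm : ∀ a b, Commute (s' a) (s'' b)) {ι : Fin l → Fin n} {κ : Fin k → Fin n}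
    (h : IsShuffle ι κ) (hι : t ∘ ι ∈ hurwitzOrbit s') (hκ : t ∘ κ ∈ hurwitzOrbit s'')
    (hlow : lowerPos p ∈ Set.range ι) : u ∈ orbitShuffles n s' s'' := by
  rcases h.mem_range_or_mem_range (upperPos p) with hupp | hupp
  · obtain ⟨q, hqlow, hqupp⟩ := exists_adjacent_of_mem_range h.strictMono_left hlow hupp
    refine ⟨ι, κ, h, ?_, ?_⟩
    · exact (hmove.comp_of_adjacent h.strictMono_left.injective hqlow hqupp).mem_hurwitzOrbit hι
    · rwa [hmove.comp_eq_of_notMem_range (h.notMem_range_right hlow) (h.notMem_range_right hupp)]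
  · have hcomm_pos : Commute (t (lowerPos p)) (t (upperPos p)) := by
      obtain ⟨⟨a, ha⟩, b, hb⟩ := And.intro hlow hupp
      rw [← ha, ← hb]
      exact commute_of_mem_hurwitzOrbit_of_mem_hurwitzOrbit hcomm hι hκ a b
    rw [hmove.eq_comp_adjacentSwap hcomm_pos]
    refine ⟨_, _, h.adjacentSwap_comp hlow hupp, ?_, ?_⟩ <;> rwa [comp_adjacentSwap_comp]

theorem HurwitzMove.mem_orbitShuffles (hmove : HurwitzMove p t u)
    (hcomm : ∀ a b, Commute (s' a) (s'' b)) (ht : t ∈ orbitShuffles n s' s'') :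
    u ∈ orbitShuffles n s' s'' := by
  obtain ⟨ι, κ, h, hι, hκ⟩ := ht
  rcases h.mem_range_or_mem_range (lowerPos p) with hlow | hlow
  · exact hmove.mem_orbitShuffles_of_lowerPos_mem_range hcomm h hι hκ hlow
  · rw [orbitShuffles_comm]
    exact hmove.mem_orbitShuffles_of_lowerPos_mem_range (fun b a => (hcomm a b).symm) h.symm hκ hι
      hlow

theorem natCard_orderEmbedding_fin (α : Type*) [LinearOrder α] (l : ℕ) :
    Nat.card (Fin l ↪o α) = (Nat.card α).choose l :=
  (Nat.card_congr Set.powersetCard.ofFinEmbEquiv).trans (Set.powersetCard.card α l)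

theorem encard_orbitShuffles_le (n : ℕ) (s' : Fin l → G) (s'' : Fin k → G) :
    (orbitShuffles n s' s'').encard ≤
      n.choose l * (hurwitzOrbit s').encard * (hurwitzOrbit s'').encard := by
  have hex (t : orbitShuffles n s' s'') : ∃ (ι : Fin l ↪o Fin n) (κ : Fin k → Fin n),
      IsShuffle ι κ ∧ t.1 ∘ ι ∈ hurwitzOrbit s' ∧ t.1 ∘ κ ∈ hurwitzOrbit s'' := by
    obtain ⟨t, ι, κ, h, hικ⟩ := t
    exact ⟨.ofStrictMono ι h.strictMono_left, κ, h, hικ⟩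
  choose ι κ hshuffle hι hκ using hex
  let parts (t : orbitShuffles n s' s'') : (Fin l ↪o Fin n) × hurwitzOrbit s' × hurwitzOrbit s'' :=
    (ι t, ⟨t.1 ∘ ι t, hι t⟩, ⟨t.1 ∘ κ t, hκ t⟩)
  have hparts : parts.Injective := by
    intro t u htu
    simp only [parts, Prod.mk.injEq, Subtype.mk.injEq] at htu
    obtain ⟨hιtu, hιeq, hκeq⟩ := htu
    have hκtu : κ t = κ u := (hshuffle t).right_unique (hιtu ▸ hshuffle u)
    rw [← hιtu] at hιeq
    rw [← hκtu] at hκeq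
    exact Subtype.ext ((hshuffle t).eq_of_comp_eq hιeq hκeq)
  calc (orbitShuffles n s' s'').encard
      ≤ ENat.card ((Fin l ↪o Fin n) × hurwitzOrbit s' × hurwitzOrbit s'') :=
        ENat.card_le_card_of_injective hparts
    _ = n.choose l * (hurwitzOrbit s').encard * (hurwitzOrbit s'').encard := by
        rw [ENat.card_prod, ENat.card_prod, ENat.card_eq_coe_natCard (Fin l ↪o Fin n),
          natCard_orderEmbedding_fin, Nat.card_fin, ENat.card_coe_set_eq, ENat.card_coe_set_eq,
          mul_assoc]

end OrbitShuffles

section SubsystemOrbits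

variable {G : Type*} [Group G] {n l k : ℕ} {s t : Fin n → G} {ι : Fin l → Fin n}
  {κ : Fin k → Fin n}

theorem hurwitzOrbit_subset_orbitShuffles (h : IsShuffle ι κ)
    (hcomm : ∀ a b, Commute (s (ι a)) (s (κ b))) :
    hurwitzOrbit s ⊆ orbitShuffles n (s ∘ ι) (s ∘ κ) := by
  intro t ht
  induction ht using hurwitzOrbit_induction with
  | self => exact ⟨ι, κ, h, mem_hurwitzOrbit_self _, mem_hurwitzOrbit_self _⟩
  | move p t u hmove _ ht => exact hmove.mem_orbitShuffles hcomm ht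

theorem exists_mem_hurwitzOrbit_adjacent (h : IsShuffle ι κ)
    (hcomm : ∀ a b, Commute (t (ι a)) (t (κ b))) (ht : t ∈ hurwitzOrbit s) (q : Fin (l - 1)) :
    ∃ u ∈ hurwitzOrbit s, ∃ (ι' : Fin l → Fin n) (κ' : Fin k → Fin n),
      IsShuffle ι' κ' ∧ u ∘ ι' = t ∘ ι ∧ u ∘ κ' = t ∘ κ ∧ ι' (lowerPos q) ⋖ ι' (upperPos q) := by
  induction hgap : (ι (upperPos q) - ι (lowerPos q) : ℕ) using Nat.strong_induction_on
    generalizing t ι κ with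
  | _ gap ih =>
    by_cases hcov : ι (lowerPos q) ⋖ ι (upperPos q)
    · exact ⟨t, ht, ι, κ, h, rfl, rfl, hcov⟩
    -- The position just below `ι (upperPos q)` belongs to `κ`; swapping the two shrinks the gap.
    obtain ⟨p, hupp, hlt, hlow⟩ := h.exists_lowerPos_mem_range_right_of_not_covBy hcov
    have hcomm_pos : Commute (t (lowerPos p)) (t (upperPos p)) := by
      obtain ⟨b, hb⟩ := hlow
      rw [← hb, ← hupp]
      exact (hcomm (upperPos q) b).symm
    have hgap_lt :
        (adjacentSwap p (ι (upperPos q)) - adjacentSwap p (ι (lowerPos q)) : ℕ) < gap := by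
      have hfix : adjacentSwap p (ι (lowerPos q)) = ι (lowerPos q) :=
        adjacentSwap_of_ne hlt.ne (hlt.trans (lowerPos_covBy_upperPos p).lt).ne
      rw [hfix, ← hgap, hupp, adjacentSwap_upperPos, val_lowerPos, val_upperPos]
      have : (ι (lowerPos q) : ℕ) < p := hlt
      omega
    have hmem : t ∘ adjacentSwap p ∈ hurwitzOrbit s :=
      HurwitzMove.mem_hurwitzOrbit (.inl (hEquiv_eq_comp_adjacentSwap hcomm_pos).symm) ht
    obtain ⟨u, hu, ι', κ', h', hι', hκ', hcov'⟩ :=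
      ih _ hgap_lt (h.symm.adjacentSwap_comp hlow ⟨_, hupp⟩).symm
        (by simpa using hcomm) hmem rfl
    rw [comp_adjacentSwap_comp] at hι' hκ'
    exact ⟨u, hu, ι', κ', h', hι', hκ', hcov'⟩

theorem exists_mem_hurwitzOrbit_comp_eq (h : IsShuffle ι κ)
    (hcomm : ∀ a b, Commute (s (ι a)) (s (κ b))) {v : Fin l → G} (hv : v ∈ hurwitzOrbit (s ∘ ι)) :
    ∃ t ∈ hurwitzOrbit s, ∃ (ι' : Fin l → Fin n) (κ' : Fin k → Fin n),
      IsShuffle ι' κ' ∧ t ∘ ι' = v ∧ t ∘ κ' = s ∘ κ := by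
  induction hv using hurwitzOrbit_induction with
  | self => exact ⟨s, mem_hurwitzOrbit_self s, ι, κ, h, rfl, rfl⟩
  | move q v w hmove hv ih =>
    obtain ⟨t₀, ht₀, ι₀, κ₀, h₀, hι₀, hκ₀⟩ := ih
    have hcomm₀ : ∀ a b, Commute (t₀ (ι₀ a)) (t₀ (κ₀ b)) := by
      intro a b
      have hκ₀b : t₀ (κ₀ b) = s (κ b) := congrFun hκ₀ b
      rw [← hι₀] at hv
      rw [hκ₀b]
      exact (commute_of_mem_hurwitzOrbit (fun a => (hcomm a b).symm) hv a).symm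
    obtain ⟨t, ht, ι', κ', h', hι', hκ', hcov⟩ := exists_mem_hurwitzOrbit_adjacent h₀ hcomm₀ ht₀ q
    obtain ⟨p, hlow, hupp⟩ := exists_eq_lowerPos_upperPos_of_covBy hcov
    rw [← hι₀, ← hι'] at hmove
    obtain ⟨u, hlift, rfl⟩ :=
      hmove.exists_lift_of_adjacent h'.strictMono_left.injective hlow hupp
    refine ⟨u, hlift.mem_hurwitzOrbit ht, ι', κ', h', rfl, ?_⟩
    rw [hlift.comp_eq_of_notMem_range (h'.notMem_range_right ⟨_, hlow⟩)
      (h'.notMem_range_right ⟨_, hupp⟩), hκ', hκ₀]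

theorem finite_hurwitzOrbit_comp (h : IsShuffle ι κ)
    (hcomm : ∀ a b, Commute (s (ι a)) (s (κ b))) (hfin : (hurwitzOrbit s).Finite) :
    (hurwitzOrbit (s ∘ ι)).Finite := by
  refine (hfin.image2 (· ∘ ·) (Set.finite_univ (α := Fin l → Fin n))).subset fun v hv => ?_
  obtain ⟨t, ht, ι', _, _, rfl, _⟩ := exists_mem_hurwitzOrbit_comp_eq h hcomm hv
  exact ⟨t, ht, ι', Set.mem_univ ι', rfl⟩

end SubsystemOrbits

theorem reducible_hurwitzOrbit_bound_general {G : Type*} [Group G] {n l k : ℕ}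
    {s : Fin n → G} {ι : Fin l → Fin n} {κ : Fin k → Fin n} (h : IsShuffle ι κ)
    (hcomm : ∀ a b, Commute (s (ι a)) (s (κ b))) (hfin : (hurwitzOrbit s).Finite) :
    (hurwitzOrbit (s ∘ ι)).Finite ∧ (hurwitzOrbit (s ∘ κ)).Finite ∧
      (hurwitzOrbit s).ncard ≤
        n.choose l * (hurwitzOrbit (s ∘ ι)).ncard * (hurwitzOrbit (s ∘ κ)).ncard := by
  have hfinι := finite_hurwitzOrbit_comp h hcomm hfin
  have hfinκ := finite_hurwitzOrbit_comp h.symm (fun b a => (hcomm a b).symm) hfin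
  refine ⟨hfinι, hfinκ, ?_⟩
  have hencard := (Set.encard_le_encard (hurwitzOrbit_subset_orbitShuffles h hcomm)).trans
    (encard_orbitShuffles_le n (s ∘ ι) (s ∘ κ))
  rw [← hfin.cast_ncard_eq, ← hfinι.cast_ncard_eq, ← hfinκ.cast_ncard_eq] at hencard
  exact_mod_cast hencard

/-- For a reducible braid system with commuting parts enumerated (in
increasing order) by `ι` and `κ`, finiteness of the Hurwitz orbit implies finiteness of the
orbits of the two sub-systems, and the orbit size is bounded by
`binom(n,l) · #(s'·B_l) · #(s''·B_{n-l})`. -/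
theorem reducible_hurwitzOrbit_bound {m n l : ℕ} (hl : 0 < l) (hln : l < n)
    (s : Fin n → BraidGroup m)
    (ι : Fin l → Fin n) (κ : Fin (n - l) → Fin n)
    (hι : StrictMono ι) (hκ : StrictMono κ)
    (hdisj : ∀ a b, ι a ≠ κ b)
    (hcover : ∀ p : Fin n, (∃ a, ι a = p) ∨ (∃ b, κ b = p))
    (hcomm : ∀ a b, Commute (s (ι a)) (s (κ b)))
    (hfin : (hurwitzOrbit s).Finite) :
    (hurwitzOrbit (s ∘ ι)).Finite ∧ (hurwitzOrbit (s ∘ κ)).Finite ∧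
      (hurwitzOrbit s).ncard ≤
        n.choose l * (hurwitzOrbit (s ∘ ι)).ncard * (hurwitzOrbit (s ∘ κ)).ncard := by
  exact reducible_hurwitzOrbit_bound_general ⟨hι, hκ, hdisj, hcover⟩ hcomm hfin
end

section
/- Let s = (β_1,…,β_n) ∈ B_m^n be a braid system, let 1 ≤ i ≤ n-1, and let k be any integer. Then s·c_i^k = (β_1^{(β_1β_{i+1})^k}, β_2^{(β_{i+1}β_1)^{-k}(β_1β_{i+1})^k}, …, β_i^{(β_{i+1}β_1)^{-k}(β_1β_{i+1})^k}, β_{i+1}^{(β_1β_{i+1})^k}, β_{i+2}, …, β_n), where x^g denotes g^{-1}xg; that is, the first entry and the (i+1)-st entry are conjugated by (β_1β_{i+1})^k, the entries in positions 2 through i are conjugated by (β_{i+1}β_1)^{-k}(β_1β_{i+1})^k, and the entries in positions i+2 through n are unchanged. -/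
/-!
Write `a ^ g = g⁻¹ a g`, and let `a`, `b` be the entries of `s` in (1-based) positions `1` and
`i + 1`. The word `c_i` is the conjugate `P σ_i² P⁻¹` with `P = σ_1⁻¹ ⋯ σ_{i-1}⁻¹`, so
`s · c_i ^ k = t` means `(s · P) · σ_i ^ (2k) = t · P`. The word `P` moves `a` next to `b` and
replaces each entry `x` it passes by `a x a⁻¹`. On the adjacent pair `(a, b)`, `σ_i²` conjugates
both entries by their product `a b`, which it therefore preserves, so `σ_i ^ (2k)` conjugates both
by `(a b) ^ k`. Hence `t` has first entry `a' = a ^ ((a b) ^ k)`, and each passed entry is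
conjugated by `a⁻¹ a' = (b a) ^ (-k) (a b) ^ k`.
-/

section HurwitzAction

variable {G : Type*} [Group G] {n : ℕ}

theorem hurwitzAct_one (s : Fin n → G) : hurwitzAct 1 s = s := by
  simp [hurwitzAct]

theorem hurwitzAct_mul (v w : FreeGroup (Fin (n - 1))) (s : Fin n → G) :
    hurwitzAct (v * w) s = hurwitzAct w (hurwitzAct v s) := by
  simp [hurwitzAct]

theorem hurwitzAct_inv_eq_iff {w : FreeGroup (Fin (n - 1))} {s t : Fin n → G} :
    hurwitzAct w⁻¹ s = t ↔ s = hurwitzAct w t := by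
  constructor
  · rintro rfl
    rw [← hurwitzAct_mul, inv_mul_cancel, hurwitzAct_one]
  · rintro rfl
    rw [← hurwitzAct_mul, mul_inv_cancel, hurwitzAct_one]

theorem hurwitzAct_conj_eq_iff {v w : FreeGroup (Fin (n - 1))} {s t : Fin n → G} :
    hurwitzAct (v * w * v⁻¹) s = t ↔ hurwitzAct w (hurwitzAct v s) = hurwitzAct v t := by
  rw [hurwitzAct_mul, hurwitzAct_mul, hurwitzAct_inv_eq_iff]

theorem hurwitzAct_zpow_of_forall_succ {w : FreeGroup (Fin (n - 1))} {orbit : ℤ → Fin n → G}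
    (horbit : ∀ k, hurwitzAct w (orbit k) = orbit (k + 1)) (k : ℤ) :
    hurwitzAct (w ^ k) (orbit 0) = orbit k := by
  induction k using Int.induction_on with
  | zero => rw [zpow_zero, hurwitzAct_one]
  | succ k ih => rw [zpow_add_one, hurwitzAct_mul, ih, horbit]
  | pred k ih =>
    rw [zpow_sub_one, hurwitzAct_mul, ih, hurwitzAct_inv_eq_iff, horbit, sub_add_cancel]

theorem hurwitzAct_genWord {j : ℕ} (hj : j + 1 < n) (s : Fin n → G) :
    hurwitzAct (genWord n (j + 1)) s = hEquiv ⟨j, by omega⟩ s := by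
  have hrange : 1 ≤ j + 1 ∧ j + 1 ≤ n - 1 := by omega
  simp [hurwitzAct, genWord, hrange]

theorem hurwitzAct_genWord_inv {j : ℕ} (hj : j + 1 < n) (s : Fin n → G) :
    hurwitzAct (genWord n (j + 1))⁻¹ s = (hEquiv ⟨j, by omega⟩).symm s := by
  rw [hurwitzAct_inv_eq_iff, hurwitzAct_genWord hj, Equiv.apply_symm_apply]

/-- The system obtained from `s` by conjugating the entries in the adjacent (0-based) positions
`j` and `j + 1` by `g`, that is, replacing `x` by `g⁻¹ * x * g`; this is the form of the action of
the even powers of `σ_{j+1}`. -/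
def conjAdjacent (j : ℕ) (g : G) (s : Fin n → G) : Fin n → G := fun p =>
  if p.val = j ∨ p.val = j + 1 then g⁻¹ * s p * g else s p

theorem conjAdjacent_one (j : ℕ) (s : Fin n → G) : conjAdjacent j 1 s = s := by
  funext p
  simp [conjAdjacent]

theorem conjAdjacent_conjAdjacent (j : ℕ) (g h : G) (s : Fin n → G) :
    conjAdjacent j h (conjAdjacent j g s) = conjAdjacent j (g * h) s := by
  funext p
  by_cases hp : p.val = j ∨ p.val = j + 1 <;> simp [conjAdjacent, hp, mul_assoc]

theorem conjAdjacent_apply_mul_apply_succ {j : ℕ} (hj : j + 1 < n) (g : G) (s : Fin n → G) :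
    conjAdjacent j g s ⟨j, by omega⟩ * conjAdjacent j g s ⟨j + 1, hj⟩ =
      g⁻¹ * (s ⟨j, by omega⟩ * s ⟨j + 1, hj⟩) * g := by
  simp [conjAdjacent, mul_assoc]

theorem hurwitzAct_genWord_sq {j : ℕ} (hj : j + 1 < n) (s : Fin n → G) :
    hurwitzAct (genWord n (j + 1) ^ 2) s =
      conjAdjacent j (s ⟨j, by omega⟩ * s ⟨j + 1, hj⟩) s := by
  rw [pow_two, hurwitzAct_mul, hurwitzAct_genWord hj, hurwitzAct_genWord hj]
  funext ⟨p, hp⟩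
  by_cases hpj : p = j
  · subst hpj
    simp [hEquiv, conjAdjacent, mul_assoc]
  by_cases hpj' : p = j + 1
  · subst hpj'
    simp [hEquiv, conjAdjacent, mul_assoc]
  simp [hEquiv, conjAdjacent, hpj, hpj']

theorem hurwitzAct_genWord_sq_zpow {j : ℕ} (hj : j + 1 < n) (s : Fin n → G) (k : ℤ) :
    hurwitzAct ((genWord n (j + 1) ^ 2) ^ k) s =
      conjAdjacent j ((s ⟨j, by omega⟩ * s ⟨j + 1, hj⟩) ^ k) s := by
  set g := s ⟨j, by omega⟩ * s ⟨j + 1, hj⟩ with hg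
  have hstep (l : ℤ) : hurwitzAct (genWord n (j + 1) ^ 2) (conjAdjacent j (g ^ l) s) =
      conjAdjacent j (g ^ (l + 1)) s := by
    have hprod : (g ^ l)⁻¹ * g * g ^ l = g := by
      rw [mul_assoc, mul_self_zpow, zpow_add_one, inv_mul_cancel_left]
    rw [hurwitzAct_genWord_sq hj, conjAdjacent_apply_mul_apply_succ hj, ← hg, hprod,
      conjAdjacent_conjAdjacent, zpow_add_one]
  simpa only [zpow_zero, conjAdjacent_one] using
    hurwitzAct_zpow_of_forall_succ (orbit := fun l => conjAdjacent j (g ^ l) s) hstep k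

/-- The word `σ_1⁻¹ ⋯ σ_j⁻¹`, which carries the first entry of a system past the next `j`
entries; the word `c_{j+1}` is the conjugate of `σ_{j+1}²` by it. -/
def shiftWord (n j : ℕ) : FreeGroup (Fin (n - 1)) :=
  ((List.range j).map fun t => (genWord n (t + 1))⁻¹).prod

theorem shiftWord_zero (n : ℕ) : shiftWord n 0 = 1 := by
  simp [shiftWord]

theorem shiftWord_succ (n j : ℕ) :
    shiftWord n (j + 1) = shiftWord n j * (genWord n (j + 1))⁻¹ := by
  simp [shiftWord, List.range_succ]

theorem cWord_succ_eq_conj (n j : ℕ) :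
    cWord n (j + 1) = shiftWord n j * genWord n (j + 1) ^ 2 * (shiftWord n j)⁻¹ := by
  simp [cWord, shiftWord, List.prod_inv_reverse, Function.comp_def]

theorem hurwitzAct_shiftWord {j : ℕ} (hj : j < n) (s : Fin n → G) :
    hurwitzAct (shiftWord n j) s = fun p : Fin n =>
      if h : p.val < j then s ⟨0, by omega⟩ * s ⟨p.val + 1, by omega⟩ * (s ⟨0, by omega⟩)⁻¹
      else if p.val = j then s ⟨0, by omega⟩ else s p := by
  induction j with
  | zero =>
    rw [shiftWord_zero, hurwitzAct_one]
    funext ⟨p, hp⟩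
    by_cases hp0 : p = 0
    · subst hp0
      simp
    · simp [hp0]
  | succ j ih =>
    rw [shiftWord_succ, hurwitzAct_mul, ih (by omega), hurwitzAct_genWord_inv hj]
    funext ⟨p, hp⟩
    simp only [hEquiv, Equiv.coe_fn_symm_mk]
    rcases lt_trichotomy p j with hlt | rfl | hgt
    · simp [hlt, hlt.ne, show p ≠ j + 1 by omega, show p < j + 1 by omega]
    · simp
    · by_cases hpj : p = j + 1
      · subst hpj
        simp
      · simp [hpj, hgt.ne', hgt.not_gt, show ¬ p < j + 1 by omega]

theorem zpow_neg_mul_zpow_eq_inv_mul_conj (a b : G) (k : ℤ) :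
    (b * a) ^ (-k) * (a * b) ^ k = a⁻¹ * (((a * b) ^ k)⁻¹ * a * (a * b) ^ k) := by
  rw [← zpow_neg, mul_zpow_mul, mul_assoc, inv_mul_cancel_left]

theorem hurwitzAct_cWord_zpow_general (s : Fin n → G) {i : ℕ} (hi : 1 ≤ i) (hin : i < n)
    (k : ℤ) :
    hurwitzAct (cWord n i ^ k) s = fun p : Fin n =>
      if p.val = 0 ∨ p.val = i then
        ((s ⟨0, by omega⟩ * s ⟨i, hin⟩) ^ k)⁻¹ * s p *
          (s ⟨0, by omega⟩ * s ⟨i, hin⟩) ^ k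
      else if p.val < i then
        ((s ⟨i, hin⟩ * s ⟨0, by omega⟩) ^ (-k) *
            (s ⟨0, by omega⟩ * s ⟨i, hin⟩) ^ k)⁻¹ * s p *
          ((s ⟨i, hin⟩ * s ⟨0, by omega⟩) ^ (-k) *
            (s ⟨0, by omega⟩ * s ⟨i, hin⟩) ^ k)
      else s p := by
  obtain ⟨j, rfl⟩ := Nat.exists_eq_add_of_le' hi
  rw [cWord_succ_eq_conj, conj_zpow, hurwitzAct_conj_eq_iff, hurwitzAct_genWord_sq_zpow hin,
    hurwitzAct_shiftWord (by omega), hurwitzAct_shiftWord (by omega)]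
  simp only [zpow_neg_mul_zpow_eq_inv_mul_conj]
  funext ⟨p, hp⟩
  rcases lt_trichotomy p j with hlt | rfl | hgt
  · simp [conjAdjacent, hlt, hlt.ne, show p ≠ j + 1 by omega, mul_assoc]
  · simp [conjAdjacent]
  · by_cases hpj : p = j + 1
    · subst hpj
      simp [conjAdjacent]
    · simp [conjAdjacent, hpj, hgt.ne', hgt.not_gt, show p ≠ 0 by omega,
        show ¬ p < j + 1 by omega]

end HurwitzAction

/-- The formula for the Hurwitz action of `c_i^k` on a braid system
(entries written 0-based: `β_p = s ⟨p-1⟩`). -/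
theorem hurwitzAct_cWord_zpow {m n : ℕ} (s : Fin n → BraidGroup m) (i : ℕ)
    (h1 : 1 ≤ i) (h2 : i ≤ n - 1) (k : ℤ) :
    hurwitzAct (cWord n i ^ k) s = fun p : Fin n =>
      if p.val = 0 ∨ p.val = i then
        ((s ⟨0, by omega⟩ * s ⟨i, by omega⟩) ^ k)⁻¹ * s p *
          (s ⟨0, by omega⟩ * s ⟨i, by omega⟩) ^ k
      else if p.val < i then
        ((s ⟨i, by omega⟩ * s ⟨0, by omega⟩) ^ (-k) *
            (s ⟨0, by omega⟩ * s ⟨i, by omega⟩) ^ k)⁻¹ * s p *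
          ((s ⟨i, by omega⟩ * s ⟨0, by omega⟩) ^ (-k) *
            (s ⟨0, by omega⟩ * s ⟨i, by omega⟩) ^ k)
      else s p :=
  hurwitzAct_cWord_zpow_general s h1 (by omega) k
end
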